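/- arXiv:2208.14198 — 2 statements merged into one kernel-verified Lean document; each statement's English description precedes it below -/
import Mathlib

section
/- Let (A,D(A)) be a linear operator on a complex Banach space X such that Σ_{π/2+δ} ⊆ ρ(A) for δ = arctan(1/C) with C ≥ 1, and such that for some M ≥ 1 the resolvent satisfies ‖μ R(μ,A)‖ ≤ √(C²+M²)/(1−q) for all q ∈ (0,1) and all μ ∈ ℂ with |arg μ| ≤ π/2 + arctan(q/C). For z ∈ Σ_δ define T(z) := (1/2πi)∫_γ e^{μz} R(μ,A) dμ, where γ is the positively oriented boundary of Σ_{π/2+arctan(q̃/C)} ∖ {μ : |μ| < 1/|z|} for any q̃ ∈ (0,1) with arctan(q̃/C) > |arg z| (by Cauchy's integral theorem the integral is independent of this choice). Then each T(z) is a well-defined bounded linear operator on X, and there is a universal constant c > 0 such that ‖T(z)‖ ≤ c · (√(C²+M²)/(1−u)) · (1 + log(C/(1−u))) whenever u ∈ (0,1) and |arg z| ≤ arctan(u/C). -/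
open Filter Topology MeasureTheory

universe u

/-- `R` is the resolvent of `A` (with domain `dom`) at `lam`. -/
def IsResolventAt {X : Type u} [NormedAddCommGroup X] [NormedSpace ℂ X]
    (dom : Set X) (A : X → X) (lam : ℂ) (R : X →L[ℂ] X) : Prop :=
  (∀ y : X, R y ∈ dom) ∧ (∀ y : X, lam • R y - A (R y) = y) ∧
    ∀ x ∈ dom, R (lam • x - A x) = x


lemma ray_bound {E : Type*} [NormedAddCommGroup E] [NormedSpace ℝ E]
    (f : ℝ → E) (r₀ σ K : ℝ) (hr : 0 < r₀) (hσ : 0 < σ) (hK : 0 ≤ K)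
    (hc : ContinuousOn f (Set.Ioi r₀))
    (hf : ∀ r, r₀ < r → ‖f r‖ * r ≤ K * Real.exp (-(σ * r))) :
    IntegrableOn f (Set.Ioi r₀) volume ∧
      ‖∫ r in Set.Ioi r₀, f r‖ ≤ K * Real.log ((1 + σ * r₀) / (σ * r₀)) := by
  have hderiv : ∀ x ∈ Set.Ici r₀, HasDerivAt (fun r : ℝ => Real.log r - Real.log (1 + σ * r))
      (1 / x - σ / (1 + σ * x)) x := by
    intro x hx
    have hx0 : 0 < x := lt_of_lt_of_le hr hx
    have h1 : HasDerivAt (fun r : ℝ => 1 + σ * r) σ x := by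
      simpa using ((hasDerivAt_id x).const_mul σ).const_add 1
    have := (Real.hasDerivAt_log hx0.ne').sub (h1.log (by positivity))
    rw [one_div]
    exact this
  have heq : ∀ x, 0 < x → 1 / x - σ / (1 + σ * x) = 1 / (x * (1 + σ * x)) := by
    intro x hx
    have : 0 < 1 + σ * x := by positivity
    field_simp
    ring
  have hpos : ∀ x ∈ Set.Ioi r₀, 0 ≤ 1 / x - σ / (1 + σ * x) := by
    intro x hx
    have hx0 : 0 < x := lt_trans hr hx
    rw [heq x hx0]; positivity
  have hlim : Tendsto (fun r : ℝ => Real.log r - Real.log (1 + σ * r)) atTop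
      (𝓝 (-Real.log σ)) := by
    have h1 : Tendsto (fun r : ℝ => - Real.log (r⁻¹ + σ)) atTop (𝓝 (-Real.log (0 + σ))) := by
      apply Tendsto.neg
      apply Tendsto.log _ (by simpa using hσ.ne')
      exact tendsto_inv_atTop_zero.add tendsto_const_nhds
    rw [zero_add] at h1
    refine h1.congr' ?_
    filter_upwards [eventually_gt_atTop 0] with r hr
    have h3 : r⁻¹ + σ = (1 + σ * r) / r := by field_simp
    rw [h3, Real.log_div (by positivity) hr.ne']; ring
  have hint := integrableOn_Ioi_deriv_of_nonneg' hderiv hpos hlim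
  have hval := integral_Ioi_of_hasDerivAt_of_nonneg' hderiv hpos hlim
  have hle : ∀ r ∈ Set.Ioi r₀, ‖f r‖ ≤ K * (1 / r - σ / (1 + σ * r)) := by
    intro r hr1
    have hr0 : 0 < r := lt_trans hr hr1
    rw [heq r hr0]
    have h1 := hf r hr1
    have h2 : Real.exp (-(σ * r)) ≤ 1 / (1 + σ * r) := by
      rw [Real.exp_neg, inv_eq_one_div]
      apply one_div_le_one_div_of_le (by positivity)
      linarith [Real.add_one_le_exp (σ * r)]
    have h3 : ‖f r‖ * r ≤ K * (1 / (1 + σ * r)) := h1.trans (by gcongr)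
    calc ‖f r‖ = ‖f r‖ * r / r := by field_simp
      _ ≤ K * (1 / (1 + σ * r)) / r := by gcongr
      _ = _ := by field_simp
  have hint' : IntegrableOn (fun r => K * (1 / r - σ / (1 + σ * r))) (Set.Ioi r₀) volume :=
    hint.const_mul K
  have hae : ∀ᵐ r ∂(volume.restrict (Set.Ioi r₀)), ‖f r‖ ≤ K * (1 / r - σ / (1 + σ * r)) :=
    (ae_restrict_iff' measurableSet_Ioi).2 (Eventually.of_forall hle)
  refine ⟨Integrable.mono' hint' (hc.aestronglyMeasurable measurableSet_Ioi) hae, ?_⟩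
  refine (norm_integral_le_of_norm_le hint' hae).trans (le_of_eq ?_)
  rw [integral_const_mul, hval, Real.log_div (by positivity) (by positivity),
    Real.log_mul hσ.ne' hr.ne']
  ring

lemma deform {E : Type*} [NormedAddCommGroup E] [NormedSpace ℂ E] [CompleteSpace E]
    (f : ℂ → E) (a b r₀ σ K : ℝ) (hr : 0 < r₀) (hσ : 0 < σ)
    (hd : ∀ r : ℝ, 0 < r → ∀ θ : ℝ, θ ∈ Set.uIcc a b →
      DifferentiableAt ℂ f ((r : ℂ) * Complex.exp ((θ : ℂ) * Complex.I)))
    (hf : ∀ r : ℝ, 0 < r → ∀ θ : ℝ, θ ∈ Set.uIcc a b →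
      ‖f ((r : ℂ) * Complex.exp ((θ : ℂ) * Complex.I))‖ * r ≤ K * Real.exp (-(σ * r)))
    (ha : IntegrableOn (fun r : ℝ => Complex.exp ((a : ℂ) * Complex.I) •
          f ((r : ℂ) * Complex.exp ((a : ℂ) * Complex.I))) (Set.Ioi r₀) volume)
    (hb : IntegrableOn (fun r : ℝ => Complex.exp ((b : ℂ) * Complex.I) •
          f ((r : ℂ) * Complex.exp ((b : ℂ) * Complex.I))) (Set.Ioi r₀) volume) :
    (∫ θ : ℝ in a..b, (Complex.I * (r₀ : ℂ) * Complex.exp ((θ : ℂ) * Complex.I)) •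
          f ((r₀ : ℂ) * Complex.exp ((θ : ℂ) * Complex.I))) +
      (∫ r : ℝ in Set.Ioi r₀, Complex.exp ((b : ℂ) * Complex.I) •
          f ((r : ℂ) * Complex.exp ((b : ℂ) * Complex.I))) =
      ∫ r : ℝ in Set.Ioi r₀, Complex.exp ((a : ℂ) * Complex.I) •
          f ((r : ℂ) * Complex.exp ((a : ℂ) * Complex.I)) := by
  set h : ℂ → E := fun w => Complex.exp w • f (Complex.exp w) with hh
  have hexp : ∀ x θ : ℝ, Complex.exp ((x : ℂ) + (θ : ℂ) * Complex.I) =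
      ((Real.exp x : ℝ) : ℂ) * Complex.exp ((θ : ℂ) * Complex.I) := by
    intro x θ; rw [Complex.exp_add, Complex.ofReal_exp]
  have hrect : ∀ L : ℝ, (∫ x : ℝ in Real.log r₀..L, h (x + a * Complex.I)) -
      (∫ x : ℝ in Real.log r₀..L, h (x + b * Complex.I)) +
      Complex.I • (∫ y : ℝ in a..b, h (L + y * Complex.I)) -
      Complex.I • (∫ y : ℝ in a..b, h (Real.log r₀ + y * Complex.I)) = 0 := by
    intro L
    have := Complex.integral_boundary_rect_eq_zero_of_differentiableOn h
      ⟨Real.log r₀, a⟩ ⟨L, b⟩ ?_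
    · simpa using this
    · intro w hw
      have hw2 : w.im ∈ Set.uIcc a b := hw.2
      have h1 : DifferentiableAt ℂ f (Complex.exp w) := by
        have := hd (Real.exp w.re) (Real.exp_pos _) w.im hw2
        rwa [← hexp, Complex.re_add_im] at this
      apply DifferentiableAt.differentiableWithinAt
      exact Complex.differentiableAt_exp.smul (h1.comp w Complex.differentiableAt_exp)
  have hray : ∀ θ ∈ Set.uIcc a b, ∀ L : ℝ,
      (∫ x : ℝ in Real.log r₀..L, h (x + θ * Complex.I)) =
      ∫ r : ℝ in r₀..Real.exp L, Complex.exp ((θ : ℂ) * Complex.I) •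
          f ((r : ℂ) * Complex.exp ((θ : ℂ) * Complex.I)) := by
    intro θ hθ L
    have := intervalIntegral.integral_deriv_smul_comp' (a := Real.log r₀) (b := L)
      (f := Real.exp) (f' := Real.exp)
      (g := fun r : ℝ => Complex.exp ((θ : ℂ) * Complex.I) •
          f ((r : ℂ) * Complex.exp ((θ : ℂ) * Complex.I)))
      (fun x _ => Real.hasDerivAt_exp x) Real.continuous_exp.continuousOn ?_
    · rw [Real.exp_log hr] at this
      rw [← this]
      apply intervalIntegral.integral_congr
      intro x _
      simp only [hh, hexp, Function.comp]
      rw [mul_smul]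
      exact (Complex.coe_smul _ _)
    · rintro r ⟨x, -, rfl⟩
      apply ContinuousAt.continuousWithinAt
      have h1 := (hd (Real.exp x) (Real.exp_pos x) θ hθ).continuousAt
      have h2 : ContinuousAt (fun r : ℝ => (r : ℂ) * Complex.exp ((θ : ℂ) * Complex.I))
        (Real.exp x) := by fun_prop
      exact (ContinuousAt.comp (f := fun r : ℝ => (r : ℂ) * Complex.exp ((θ : ℂ) * Complex.I)) h1 h2).const_smul _
  have hA := (intervalIntegral_tendsto_integral_Ioi r₀ ha Real.tendsto_exp_atTop)
  have hB := (intervalIntegral_tendsto_integral_Ioi r₀ hb Real.tendsto_exp_atTop)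
  have hV : Tendsto (fun L : ℝ => Complex.I • (∫ y : ℝ in a..b, h (L + y * Complex.I))) atTop
      (𝓝 0) := by
    have hlim : Tendsto (fun L : ℝ => K * Real.exp (-(σ * Real.exp L)) * |b - a|) atTop
        (𝓝 (K * 0 * |b - a|)) := by
      apply Tendsto.mul_const
      apply Tendsto.const_mul
      apply Real.tendsto_exp_neg_atTop_nhds_zero.comp
      exact Real.tendsto_exp_atTop.const_mul_atTop hσ
    rw [mul_zero, zero_mul] at hlim
    refine squeeze_zero_norm (fun L => ?_) hlim
    rw [norm_smul, Complex.norm_I, one_mul]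
    apply intervalIntegral.norm_integral_le_of_norm_le_const
    intro y hy
    have := hf (Real.exp L) (Real.exp_pos _) y (Set.uIoc_subset_uIcc hy)
    simp only [hh, hexp]
    rw [norm_smul, norm_mul, Complex.norm_exp_ofReal_mul_I, mul_one, Complex.norm_real,
      Real.norm_of_nonneg (Real.exp_pos _).le, mul_comm]
    exact this
  have harc : (∫ θ : ℝ in a..b, (Complex.I * (r₀ : ℂ) * Complex.exp ((θ : ℂ) * Complex.I)) •
          f ((r₀ : ℂ) * Complex.exp ((θ : ℂ) * Complex.I))) =
      Complex.I • (∫ y : ℝ in a..b, h (Real.log r₀ + y * Complex.I)) := by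
    rw [← intervalIntegral.integral_smul]
    apply intervalIntegral.integral_congr
    intro x _
    simp only [hh, hexp, Real.exp_log hr, smul_smul, mul_assoc]
  have hT := ((hA.sub hB).add hV).sub_const
    (Complex.I • (∫ y : ℝ in a..b, h (Real.log r₀ + y * Complex.I)))
  have h0 := tendsto_nhds_unique hT ((tendsto_const_nhds (x := (0 : E))).congr (fun L => by
    rw [← hrect L, hray a Set.left_mem_uIcc, hray b Set.right_mem_uIcc]))
  rw [harc]
  rw [add_zero, sub_eq_zero, sub_eq_iff_eq_add] at h0
  exact h0.symm

lemma resolvent_diff {X : Type*} [NormedAddCommGroup X] [NormedSpace ℂ X] [CompleteSpace X]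
    (dom : Set X) (A : X → X) (R : ℂ → X →L[ℂ] X) (μ : ℂ)
    (h : ∀ᶠ l in 𝓝 μ, IsResolventAt dom A l (R l)) : DifferentiableAt ℂ R μ := by
  have hμ := h.self_of_nhds
  have hd : DifferentiableAt ℂ (fun l : ℂ => (1 : X →L[ℂ] X) + (l - μ) • R μ) μ := by fun_prop
  have h1 : DifferentiableAt ℂ
      (fun l : ℂ => R μ * Ring.inverse ((1 : X →L[ℂ] X) + (l - μ) • R μ)) μ := by
    apply DifferentiableAt.const_mul
    have hu : IsUnit ((1 : X →L[ℂ] X) + (μ - μ) • R μ) := by simp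
    exact DifferentiableAt.comp μ (differentiableAt_inverse (𝕜 := ℂ) hu) hd
  refine h1.congr_of_eventuallyEq ?_
  have hunit : ∀ᶠ l in 𝓝 μ, IsUnit ((1 : X →L[ℂ] X) + (l - μ) • R μ) := by
    apply hd.continuousAt.eventually
    apply Units.isOpen.mem_nhds
    simp
  filter_upwards [h, hunit] with l hl hul
  have key : R l * ((1 : X →L[ℂ] X) + (l - μ) • R μ) = R μ := by
    ext y
    have e1 := hl.2.2 (R μ y) (hμ.1 y)
    have e2 := hμ.2.1 y
    have e3 : l • R μ y - A (R μ y) = y + (l - μ) • R μ y := by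
      have e4 : A (R μ y) = μ • R μ y - y := by
        nth_rewrite 3 [← e2]; abel
      rw [sub_smul, e4]; abel
    rw [e3] at e1
    exact e1
  calc R l = R l * (((1 : X →L[ℂ] X) + (l - μ) • R μ) *
        Ring.inverse ((1 : X →L[ℂ] X) + (l - μ) • R μ)) := by
        rw [Ring.mul_inverse_cancel _ hul, mul_one]
    _ = _ := by rw [← mul_assoc, key]

lemma cos_bound (θ ζ m : ℝ) (hm : |ζ| ≤ m) (hm4 : m ≤ Real.pi / 4)
    (h1 : Real.pi / 2 + m ≤ |θ|) (h2 : |θ| ≤ Real.pi / 2 + Real.pi / 4) :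
    Real.cos (θ + ζ) ≤ - Real.sin (m - |ζ|) := by
  have key : ∀ t ζ' : ℝ, |ζ'| = |ζ| → Real.pi / 2 + m ≤ t → t ≤ Real.pi / 2 + Real.pi / 4 →
      Real.cos (t + ζ') ≤ - Real.sin (m - |ζ|) := by
    intro t ζ' hz a1 a2
    have e : Real.cos (t + ζ') = - Real.sin (t - Real.pi / 2 + ζ') := by
      rw [← Real.cos_add_pi_div_two]; congr 1; ring
    rw [e, neg_le_neg_iff]
    have := abs_le.1 hz.le
    have := abs_nonneg ζ
    apply Real.sin_le_sin_of_le_of_le_pi_div_two <;> linarith [Real.pi_pos]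
  rcases abs_cases θ with ⟨e, -⟩ | ⟨e, -⟩
  · rw [e] at h1 h2; exact key θ ζ rfl h1 h2
  · rw [e] at h1 h2
    rw [← Real.cos_neg, neg_add]
    exact key (-θ) (-ζ) (abs_neg _) h1 h2

lemma sin_bound (C u : ℝ) (hC : 1 ≤ C) (hu : u ∈ Set.Ioo (0:ℝ) 1) :
    (1 - u) / (4 * C) ≤
      Real.sin (Real.arctan ((1 + u) / 2 / C) - Real.arctan (u / C)) := by
  obtain ⟨hu0, hu1⟩ := hu
  have hC0 : 0 < C := by linarith
  have hs : ∀ x : ℝ, 0 ≤ x → x ≤ 1 → 0 < √(1 + x ^ 2) ∧ √(1 + x ^ 2) ^ 2 ≤ 2 := by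
    intro x h0 h1
    refine ⟨by positivity, ?_⟩
    rw [Real.sq_sqrt (by positivity)]; nlinarith
  rw [Real.sin_sub, Real.sin_arctan, Real.sin_arctan, Real.cos_arctan, Real.cos_arctan]
  obtain ⟨p1, p2⟩ := hs ((1 + u) / 2 / C) (by positivity) (by rw [div_le_one hC0]; linarith)
  obtain ⟨q1, q2⟩ := hs (u / C) (by positivity) (by rw [div_le_one hC0]; linarith)
  set p := √(1 + ((1 + u) / 2 / C) ^ 2)
  set q := √(1 + (u / C) ^ 2)
  have e : (1 + u) / 2 / C / p * (1 / q) - 1 / p * (u / C / q) = (1 - u) / (2 * C * (p * q)) := by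
    field_simp; ring
  rw [e]
  have hpq : p * q ≤ 2 := by nlinarith [sq_nonneg (p - q)]
  apply div_le_div_of_nonneg_left (by linarith) (by positivity)
  nlinarith

set_option maxHeartbeats 2000000 in
/-- Quantitative construction of the holomorphic semigroup via the Cauchy
integral: there is a universal constant `c > 0` such that if the resolvent
`R μ` of `A` exists on the sector `|arg μ| < π/2 + arctan (1/C)` and satisfies
`‖μ R μ‖ ≤ √(C² + M²)/(1-q)` on each subsector `|arg μ| ≤ π/2 + arctan (q/C)`,
then for each `z ≠ 0` with `|arg z| < arctan (1/C)` and any admissible contour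
parameter `q̃`, the three pieces (circular arc in the sector of radius `1/|z|`
and the two rays) of the contour integral `(2πi)⁻¹ ∫_γ e^{μz} R(μ) dμ`
converge, and the resulting operator `T z` satisfies
`‖T z‖ ≤ c · (√(C² + M²)/(1-u)) · (1 + log (C/(1-u)))` whenever `u ∈ (0,1)`
and `|arg z| ≤ arctan (u/C)`. -/
theorem stmt1 :
    ∃ c : ℝ, 0 < c ∧
      ∀ (X : Type u) [NormedAddCommGroup X] [NormedSpace ℂ X] [CompleteSpace X]
        (C M : ℝ), 1 ≤ C → 1 ≤ M →
      ∀ (dom : Set X) (A : X → X) (R : ℂ → X →L[ℂ] X),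
      (∀ μ : ℂ, μ ≠ 0 → |μ.arg| < Real.pi / 2 + Real.arctan (1 / C) →
        IsResolventAt dom A μ (R μ)) →
      (∀ q : ℝ, q ∈ Set.Ioo (0 : ℝ) 1 → ∀ μ : ℂ, μ ≠ 0 →
        |μ.arg| ≤ Real.pi / 2 + Real.arctan (q / C) →
        ‖μ • R μ‖ ≤ Real.sqrt (C ^ 2 + M ^ 2) / (1 - q)) →
      ∀ z : ℂ, z ≠ 0 → |z.arg| < Real.arctan (1 / C) →
      ∀ qt : ℝ, qt ∈ Set.Ioo (0 : ℝ) 1 → |z.arg| < Real.arctan (qt / C) →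
      let φ : ℝ := Real.pi / 2 + Real.arctan (qt / C)
      let r₀ : ℝ := ‖z‖⁻¹
      let F : ℂ → X →L[ℂ] X := fun μ => Complex.exp (μ * z) • R μ
      (IntervalIntegrable
        (fun θ : ℝ => (Complex.I * (r₀ : ℂ) * Complex.exp ((θ : ℂ) * Complex.I)) •
          F ((r₀ : ℂ) * Complex.exp ((θ : ℂ) * Complex.I))) volume (-φ) φ) ∧
      (IntegrableOn
        (fun r : ℝ => Complex.exp ((φ : ℂ) * Complex.I) •
          F ((r : ℂ) * Complex.exp ((φ : ℂ) * Complex.I))) (Set.Ioi r₀) volume) ∧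
      (IntegrableOn
        (fun r : ℝ => Complex.exp (-(φ : ℂ) * Complex.I) •
          F ((r : ℂ) * Complex.exp (-(φ : ℂ) * Complex.I))) (Set.Ioi r₀) volume) ∧
      ∀ u : ℝ, u ∈ Set.Ioo (0 : ℝ) 1 → |z.arg| ≤ Real.arctan (u / C) →
        ‖(2 * (Real.pi : ℂ) * Complex.I)⁻¹ •
            ((∫ θ : ℝ in (-φ)..φ,
                (Complex.I * (r₀ : ℂ) * Complex.exp ((θ : ℂ) * Complex.I)) •
                  F ((r₀ : ℂ) * Complex.exp ((θ : ℂ) * Complex.I))) +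
              (∫ r : ℝ in Set.Ioi r₀, Complex.exp ((φ : ℂ) * Complex.I) •
                F ((r : ℂ) * Complex.exp ((φ : ℂ) * Complex.I))) -
              ∫ r : ℝ in Set.Ioi r₀, Complex.exp (-(φ : ℂ) * Complex.I) •
                F ((r : ℂ) * Complex.exp (-(φ : ℂ) * Complex.I)))‖ ≤
          c * (Real.sqrt (C ^ 2 + M ^ 2) / (1 - u)) * (1 + Real.log (C / (1 - u))) := by
  refine ⟨12, by norm_num, ?_⟩
  intro X _ _ _ C M hC hM dom A R hres hbd z hz hzδ qt hqt hzq φ r₀ F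
  have hC0 : 0 < C := by linarith
  have hz0 : 0 < ‖z‖ := norm_pos_iff.2 hz
  have hr₀ : 0 < r₀ := inv_pos.2 hz0
  have hπ := Real.pi_pos
  set S := Real.sqrt (C ^ 2 + M ^ 2) with hS
  have hS0 : 0 ≤ S := Real.sqrt_nonneg _
  have hδ4 : Real.arctan (1 / C) ≤ Real.pi / 4 := by
    rw [← Real.arctan_one]
    exact Real.arctan_strictMono.monotone (by rw [div_le_one hC0]; exact hC)
  have hqδ : ∀ q : ℝ, q < 1 → Real.arctan (q / C) < Real.arctan (1 / C) := fun q hq =>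
    Real.arctan_strictMono (by gcongr)
  have hq0 : ∀ q : ℝ, 0 < q → 0 < Real.arctan (q / C) := fun q hq =>
    Real.arctan_pos.2 (by positivity)
  have harg : ∀ r : ℝ, 0 < r → ∀ θ : ℝ, |θ| < Real.pi / 2 + Real.arctan (1 / C) →
      ((r : ℂ) * Complex.exp ((θ : ℂ) * Complex.I)).arg = θ := by
    intro r hr θ hθ
    rw [Complex.exp_mul_I]
    have := abs_lt.1 hθ
    exact Complex.arg_mul_cos_add_sin_mul_I hr ⟨by linarith, by linarith⟩
  have hne : ∀ r : ℝ, 0 < r → ∀ θ : ℝ, (r : ℂ) * Complex.exp ((θ : ℂ) * Complex.I) ≠ 0 := by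
    intro r hr θ
    exact mul_ne_zero (by exact_mod_cast hr.ne') (Complex.exp_ne_zero _)
  have hdF : ∀ r : ℝ, 0 < r → ∀ θ : ℝ, |θ| < Real.pi / 2 + Real.arctan (1 / C) →
      DifferentiableAt ℂ F ((r : ℂ) * Complex.exp ((θ : ℂ) * Complex.I)) := by
    intro r hr θ hθ
    have hR : DifferentiableAt ℂ R ((r : ℂ) * Complex.exp ((θ : ℂ) * Complex.I)) := by
      apply resolvent_diff dom A
      have ha := harg r hr θ hθ
      set μ := (r : ℂ) * Complex.exp ((θ : ℂ) * Complex.I) with hμ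
      have hslit : μ ∈ Complex.slitPlane := by
        rw [Complex.mem_slitPlane_iff_arg, ha]
        refine ⟨?_, hne r hr θ⟩
        have := abs_lt.1 hθ
        linarith
      have h1 : ∀ᶠ l in 𝓝 μ, |l.arg| < Real.pi / 2 + Real.arctan (1 / C) := by
        apply (Complex.continuousAt_arg hslit).abs.eventually_lt_const
        simpa only [ha] using hθ
      filter_upwards [h1, eventually_ne_nhds (hne r hr θ)] with l hl1 hl2
      exact hres l hl2 hl1
    have hE : DifferentiableAt ℂ (fun μ : ℂ => Complex.exp (μ * z))
      ((r : ℂ) * Complex.exp ((θ : ℂ) * Complex.I)) := by fun_prop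
    exact hE.smul hR
  have hnorm : ∀ q : ℝ, q ∈ Set.Ioo (0 : ℝ) 1 → ∀ r : ℝ, 0 < r → ∀ θ : ℝ,
      |θ| ≤ Real.pi / 2 + Real.arctan (q / C) →
      ‖F ((r : ℂ) * Complex.exp ((θ : ℂ) * Complex.I))‖ * r ≤
        S / (1 - q) * Real.exp (r * ‖z‖ * Real.cos (θ + z.arg)) := by
    intro q hq r hr θ hθ
    have hθ' : |θ| < Real.pi / 2 + Real.arctan (1 / C) := by linarith [hqδ q hq.2]
    have h1 := hbd q hq _ (hne r hr θ) (by rw [harg r hr θ hθ']; exact hθ)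
    rw [norm_smul, norm_mul, Complex.norm_exp_ofReal_mul_I, mul_one, Complex.norm_real,
      Real.norm_of_nonneg hr.le] at h1
    have h2 : ((r : ℂ) * Complex.exp ((θ : ℂ) * Complex.I) * z).re =
        r * ‖z‖ * Real.cos (θ + z.arg) := by
      conv_lhs => rw [← Complex.norm_mul_exp_arg_mul_I z]
      have : (r : ℂ) * Complex.exp ((θ : ℂ) * Complex.I) *
          ((‖z‖ : ℂ) * Complex.exp ((z.arg : ℂ) * Complex.I)) =
          ((r * ‖z‖ : ℝ) : ℂ) * Complex.exp (((θ + z.arg : ℝ) : ℂ) * Complex.I) := by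
        push_cast
        rw [add_mul, Complex.exp_add]; ring
      rw [this, Complex.re_ofReal_mul, Complex.exp_ofReal_mul_I_re]
    simp only [F]
    rw [norm_smul, Complex.norm_exp, h2]
    calc _ = (r * ‖R ((r : ℂ) * Complex.exp ((θ : ℂ) * Complex.I))‖) *
          Real.exp (r * ‖z‖ * Real.cos (θ + z.arg)) := by ring
      _ ≤ _ := by gcongr
  have hdecay : ∀ q m : ℝ, q ∈ Set.Ioo (0 : ℝ) 1 → |z.arg| ≤ m → m ≤ Real.arctan (q / C) →
      ∀ s : ℝ, s ≤ Real.sin (m - |z.arg|) → ∀ r : ℝ, 0 < r → ∀ θ : ℝ,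
      Real.pi / 2 + m ≤ |θ| → |θ| ≤ Real.pi / 2 + Real.arctan (q / C) →
      ‖F ((r : ℂ) * Complex.exp ((θ : ℂ) * Complex.I))‖ * r ≤
        S / (1 - q) * Real.exp (-(s * ‖z‖ * r)) := by
    intro q m hq hm hmq s hs r hr θ h1 h2
    refine (hnorm q hq r hr θ h2).trans ?_
    have h3 : 0 ≤ S / (1 - q) := div_nonneg hS0 (by linarith [hq.2])
    have h4 := cos_bound θ z.arg m hm (by linarith [hqδ q hq.2]) h1 (by linarith [hqδ q hq.2])
    have h5 : r * ‖z‖ * Real.cos (θ + z.arg) ≤ r * ‖z‖ * (-s) :=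
      mul_le_mul_of_nonneg_left (by linarith) (by positivity)
    gcongr
    linarith
  have hray : ∀ q : ℝ, q ∈ Set.Ioo (0 : ℝ) 1 → |z.arg| < Real.arctan (q / C) →
      ∀ s : ℝ, 0 < s → s ≤ Real.sin (Real.arctan (q / C) - |z.arg|) →
      ∀ θ : ℝ, |θ| = Real.pi / 2 + Real.arctan (q / C) →
      IntegrableOn (fun r : ℝ => Complex.exp ((θ : ℂ) * Complex.I) •
          F ((r : ℂ) * Complex.exp ((θ : ℂ) * Complex.I))) (Set.Ioi r₀) volume ∧
      ‖∫ r : ℝ in Set.Ioi r₀, Complex.exp ((θ : ℂ) * Complex.I) •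
          F ((r : ℂ) * Complex.exp ((θ : ℂ) * Complex.I))‖ ≤
        S / (1 - q) * Real.log ((1 + s) / s) := by
    intro q hq hzq s hs hs' θ hθ
    have hsr : s * ‖z‖ * r₀ = s := by simp only [r₀]; field_simp
    have := ray_bound (fun r : ℝ => Complex.exp ((θ : ℂ) * Complex.I) •
          F ((r : ℂ) * Complex.exp ((θ : ℂ) * Complex.I))) r₀ (s * ‖z‖) (S / (1 - q)) hr₀
          (by positivity) (div_nonneg hS0 (by linarith [hq.2])) ?_ ?_
    · rw [hsr] at this; exact this
    · intro r hr
      apply ContinuousAt.continuousWithinAt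
      have h1 := (hdF r (lt_trans hr₀ hr) θ (by linarith [hqδ q hq.2])).continuousAt
      have h2 : ContinuousAt (fun r : ℝ => (r : ℂ) * Complex.exp ((θ : ℂ) * Complex.I)) r := by
        fun_prop
      have h3 : ContinuousAt (fun _ : ℝ => Complex.exp ((θ : ℂ) * Complex.I)) r :=
        continuousAt_const
      exact h3.smul (ContinuousAt.comp
        (f := fun r : ℝ => (r : ℂ) * Complex.exp ((θ : ℂ) * Complex.I)) h1 h2)
    · intro r hr
      rw [norm_smul, Complex.norm_exp_ofReal_mul_I, one_mul]
      exact hdecay q _ hq hzq.le le_rfl s hs' r (lt_trans hr₀ hr) θ hθ.ge hθ.le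
  have hsinpos : ∀ q : ℝ, q < 1 → |z.arg| < Real.arctan (q / C) →
      0 < Real.sin (Real.arctan (q / C) - |z.arg|) := by
    intro q hq h
    apply Real.sin_pos_of_pos_of_lt_pi (by linarith)
    linarith [hqδ q hq, abs_nonneg z.arg]
  have harcint : ∀ a b : ℝ, |a| < Real.pi / 2 + Real.arctan (1 / C) →
      |b| < Real.pi / 2 + Real.arctan (1 / C) → IntervalIntegrable
        (fun θ : ℝ => (Complex.I * (r₀ : ℂ) * Complex.exp ((θ : ℂ) * Complex.I)) •
          F ((r₀ : ℂ) * Complex.exp ((θ : ℂ) * Complex.I))) volume a b := by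
    intro a b ha hb
    apply ContinuousOn.intervalIntegrable
    intro θ hθ
    apply ContinuousAt.continuousWithinAt
    have hθ' : |θ| < Real.pi / 2 + Real.arctan (1 / C) := by
      rw [abs_lt] at *
      rcases Set.mem_uIcc.1 hθ with h | h <;> constructor <;> linarith [h.1, h.2]
    have h1 := (hdF r₀ hr₀ θ hθ').continuousAt
    have h2 : ContinuousAt (fun θ : ℝ => (r₀ : ℂ) * Complex.exp ((θ : ℂ) * Complex.I)) θ := by
      fun_prop
    have h3 : ContinuousAt (fun θ : ℝ => Complex.I * (r₀ : ℂ) *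
      Complex.exp ((θ : ℂ) * Complex.I)) θ := by fun_prop
    exact h3.smul (ContinuousAt.comp
        (f := fun θ : ℝ => (r₀ : ℂ) * Complex.exp ((θ : ℂ) * Complex.I)) h1 h2)
  have hφ0 : 0 < φ := by simp only [φ]; linarith [hq0 qt hqt.1]
  have hφabs : |φ| = Real.pi / 2 + Real.arctan (qt / C) := abs_of_pos hφ0
  have hφabs' : |-φ| = Real.pi / 2 + Real.arctan (qt / C) := by rw [abs_neg, hφabs]
  have hφlt : |φ| < Real.pi / 2 + Real.arctan (1 / C) := by linarith [hqδ qt hqt.2]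
  have hφlt' : |-φ| < Real.pi / 2 + Real.arctan (1 / C) := by linarith [hqδ qt hqt.2]
  have hi1 := (hray qt hqt hzq _ (hsinpos qt hqt.2 hzq) le_rfl φ hφabs).1
  have hi2 := (hray qt hqt hzq _ (hsinpos qt hqt.2 hzq) le_rfl (-φ) hφabs').1
  have hcast : -(φ : ℂ) = ((-φ : ℝ) : ℂ) := by push_cast; rfl
  rw [hcast]
  refine ⟨harcint _ _ hφlt' hφlt, hi1, hi2, ?_⟩
  intro u hu hzu
  set q' : ℝ := (1 + u) / 2 with hq'def
  have hq' : q' ∈ Set.Ioo (0 : ℝ) 1 := ⟨by linarith [hu.1], by linarith [hu.2]⟩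
  have huq : Real.arctan (u / C) < Real.arctan (q' / C) :=
    Real.arctan_strictMono (by gcongr; linarith [hu.2])
  have hzq' : |z.arg| < Real.arctan (q' / C) := lt_of_le_of_lt hzu huq
  set φ' : ℝ := Real.pi / 2 + Real.arctan (q' / C) with hφ'
  have hφ'0 : 0 < φ' := by linarith [hq0 q' hq'.1]
  have hφ'abs : |φ'| = Real.pi / 2 + Real.arctan (q' / C) := abs_of_pos hφ'0
  have hφ'abs' : |-φ'| = Real.pi / 2 + Real.arctan (q' / C) := by rw [abs_neg, hφ'abs]
  have hφ'lt : |φ'| < Real.pi / 2 + Real.arctan (1 / C) := by linarith [hqδ q' hq'.2]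
  have hφ'lt' : |-φ'| < Real.pi / 2 + Real.arctan (1 / C) := by linarith [hqδ q' hq'.2]
  set s : ℝ := (1 - u) / (4 * C) with hs
  have hs0 : 0 < s := div_pos (by linarith [hu.2]) (by linarith)
  have hsle : s ≤ Real.sin (Real.arctan (q' / C) - |z.arg|) := by
    refine (sin_bound C u hC hu).trans ?_
    apply Real.sin_le_sin_of_le_of_le_pi_div_two
    · linarith
    · linarith [hqδ q' hq'.2, abs_nonneg z.arg]
    · linarith
  obtain ⟨hj1, hk1⟩ := hray q' hq' hzq' s hs0 hsle φ' hφ'abs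
  obtain ⟨hj2, hk2⟩ := hray q' hq' hzq' s hs0 hsle (-φ') hφ'abs'
  have hdef : ∀ a b : ℝ, (∀ θ ∈ Set.uIcc a b,
      Real.pi / 2 + min (Real.arctan (qt / C)) (Real.arctan (q' / C)) ≤ |θ| ∧
      |θ| ≤ Real.pi / 2 + Real.arctan (max qt q' / C)) →
      IntegrableOn (fun r : ℝ => Complex.exp ((a : ℂ) * Complex.I) •
          F ((r : ℂ) * Complex.exp ((a : ℂ) * Complex.I))) (Set.Ioi r₀) volume →
      IntegrableOn (fun r : ℝ => Complex.exp ((b : ℂ) * Complex.I) •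
          F ((r : ℂ) * Complex.exp ((b : ℂ) * Complex.I))) (Set.Ioi r₀) volume →
      (∫ θ : ℝ in a..b, (Complex.I * (r₀ : ℂ) * Complex.exp ((θ : ℂ) * Complex.I)) •
          F ((r₀ : ℂ) * Complex.exp ((θ : ℂ) * Complex.I))) +
      (∫ r : ℝ in Set.Ioi r₀, Complex.exp ((b : ℂ) * Complex.I) •
          F ((r : ℂ) * Complex.exp ((b : ℂ) * Complex.I))) =
      ∫ r : ℝ in Set.Ioi r₀, Complex.exp ((a : ℂ) * Complex.I) •
          F ((r : ℂ) * Complex.exp ((a : ℂ) * Complex.I)) := by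
    intro a b hab ha hb
    have hmax : max qt q' ∈ Set.Ioo (0 : ℝ) 1 :=
      ⟨lt_max_of_lt_left hqt.1, max_lt hqt.2 hq'.2⟩
    set m := min (Real.arctan (qt / C)) (Real.arctan (q' / C)) with hm
    have hzm : |z.arg| < m := lt_min hzq hzq'
    have hm1 : m ≤ Real.arctan (max qt q' / C) :=
      (min_le_left _ _).trans (Real.arctan_strictMono.monotone (by gcongr; exact le_max_left _ _))
    have hsin : 0 < Real.sin (m - |z.arg|) := by
      apply Real.sin_pos_of_pos_of_lt_pi (by linarith)
      linarith [hqδ _ hmax.2, abs_nonneg z.arg]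
    refine deform F a b r₀ (Real.sin (m - |z.arg|) * ‖z‖) (S / (1 - max qt q')) hr₀
      (by positivity) ?_ ?_ ha hb
    · intro r hr θ hθ
      exact hdF r hr θ (by linarith [(hab θ hθ).2, hqδ _ hmax.2])
    · intro r hr θ hθ
      exact hdecay _ m hmax hzm.le hm1 _ le_rfl r hr θ (hab θ hθ).1 (hab θ hθ).2
  have hmaxarc : Real.arctan (max qt q' / C) =
      max (Real.arctan (qt / C)) (Real.arctan (q' / C)) := by
    rw [← Real.arctan_strictMono.monotone.map_max]
    congr 1
    exact (max_div_div_right hC0.le qt q').symm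
  have hd1 := hdef φ' φ (by
    intro θ hθ
    rw [hmaxarc]
    have h0 : 0 < θ := by
      rcases Set.mem_uIcc.1 hθ with h | h <;> linarith [h.1]
    rw [abs_of_pos h0]
    have a1 := min_le_left (Real.arctan (qt / C)) (Real.arctan (q' / C))
    have a2 := min_le_right (Real.arctan (qt / C)) (Real.arctan (q' / C))
    have a3 := le_max_left (Real.arctan (qt / C)) (Real.arctan (q' / C))
    have a4 := le_max_right (Real.arctan (qt / C)) (Real.arctan (q' / C))
    rcases Set.mem_uIcc.1 hθ with h | h <;> constructor <;> linarith [h.1, h.2]) hj1 hi1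
  have hd2 := hdef (-φ') (-φ) (by
    intro θ hθ
    rw [hmaxarc]
    have h0 : θ < 0 := by
      rcases Set.mem_uIcc.1 hθ with h | h <;> linarith [h.2]
    rw [abs_of_neg h0]
    have a1 := min_le_left (Real.arctan (qt / C)) (Real.arctan (q' / C))
    have a2 := min_le_right (Real.arctan (qt / C)) (Real.arctan (q' / C))
    have a3 := le_max_left (Real.arctan (qt / C)) (Real.arctan (q' / C))
    have a4 := le_max_right (Real.arctan (qt / C)) (Real.arctan (q' / C))
    rcases Set.mem_uIcc.1 hθ with h | h <;> constructor <;> linarith [h.1, h.2]) hj2 hi2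
  have hadd1 := intervalIntegral.integral_add_adjacent_intervals
    (harcint (-φ') (-φ) hφ'lt' hφlt') (harcint (-φ) φ hφlt' hφlt)
  have hadd2 := intervalIntegral.integral_add_adjacent_intervals
    (harcint (-φ') φ' hφ'lt' hφ'lt) (harcint φ' φ hφ'lt hφlt)
  have harcb : ‖∫ θ : ℝ in (-φ')..φ',
      (Complex.I * (r₀ : ℂ) * Complex.exp ((θ : ℂ) * Complex.I)) •
          F ((r₀ : ℂ) * Complex.exp ((θ : ℂ) * Complex.I))‖ ≤
      S / (1 - q') * Real.exp 1 * |φ' - -φ'| := by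
    apply intervalIntegral.norm_integral_le_of_norm_le_const
    intro θ hθ
    have hθ' : |θ| ≤ φ' := by
      rw [Set.uIoc_of_le (by linarith)] at hθ
      exact abs_le.2 ⟨hθ.1.le, hθ.2⟩
    have h1 := hnorm q' hq' r₀ hr₀ θ hθ'
    rw [norm_smul, norm_mul, norm_mul, Complex.norm_I, Complex.norm_exp_ofReal_mul_I, mul_one,
      one_mul, Complex.norm_real, Real.norm_of_nonneg hr₀.le, mul_comm]
    refine h1.trans ?_
    have h3 : 0 ≤ S / (1 - q') := div_nonneg hS0 (by linarith [hq'.2])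
    have h4 : r₀ * ‖z‖ = 1 := by simp only [r₀]; field_simp
    rw [h4, one_mul]
    gcongr
    exact Real.cos_le_one _
  generalize (∫ θ : ℝ in (-φ)..φ, (Complex.I * (r₀ : ℂ) * Complex.exp ((θ : ℂ) * Complex.I)) •
          F ((r₀ : ℂ) * Complex.exp ((θ : ℂ) * Complex.I))) = I1 at *
  generalize (∫ θ : ℝ in (-φ')..φ', (Complex.I * (r₀ : ℂ) * Complex.exp ((θ : ℂ) * Complex.I)) •
          F ((r₀ : ℂ) * Complex.exp ((θ : ℂ) * Complex.I))) = I2 at *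
  generalize (∫ θ : ℝ in (-φ')..(-φ), (Complex.I * (r₀ : ℂ) *
    Complex.exp ((θ : ℂ) * Complex.I)) •
          F ((r₀ : ℂ) * Complex.exp ((θ : ℂ) * Complex.I))) = I3 at *
  generalize (∫ θ : ℝ in φ'..φ, (Complex.I * (r₀ : ℂ) * Complex.exp ((θ : ℂ) * Complex.I)) •
          F ((r₀ : ℂ) * Complex.exp ((θ : ℂ) * Complex.I))) = I4 at *
  rw [← hd1] at hk1
  rw [← hd2] at hk2
  generalize (∫ r : ℝ in Set.Ioi r₀, Complex.exp ((φ : ℂ) * Complex.I) •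
          F ((r : ℂ) * Complex.exp ((φ : ℂ) * Complex.I))) = J1 at *
  generalize (∫ r : ℝ in Set.Ioi r₀, Complex.exp (((-φ : ℝ) : ℂ) * Complex.I) •
          F ((r : ℂ) * Complex.exp (((-φ : ℝ) : ℂ) * Complex.I))) = J2 at *
  have hsum : I1 + J1 - J2 = I2 + (I4 + J1) - (I3 + J2) := by
    have : I1 = I2 + I4 - I3 := by
      rw [hadd2, ← hadd1]; abel
    rw [this]; abel
  have hq1 : S / (1 - q') = 2 * (S / (1 - u)) := by
    have : 1 - u ≠ 0 := by linarith [hu.2]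
    have e : 1 - q' = (1 - u) / 2 := by rw [hq'def]; ring
    rw [e]; field_simp
  set K := S / (1 - u) with hK
  have hK0 : 0 ≤ K := div_nonneg hS0 (by linarith [hu.2])
  set Λ := Real.log (C / (1 - u)) with hΛ
  have h1u : 0 < 1 - u := by linarith [hu.2]
  have hΛ0 : 0 ≤ Λ := by
    apply Real.log_nonneg
    rw [le_div_iff₀ h1u]; linarith [hu.1]
  have hlog : Real.log ((1 + s) / s) ≤ 3 + Λ := by
    have hs1 : s ≤ 1 := by
      rw [hs, div_le_one (by positivity)]; linarith [hu.1]
    have h1 : (1 + s) / s ≤ 8 * (C / (1 - u)) := by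
      have : 8 * (C / (1 - u)) = 2 / s := by rw [hs]; field_simp; norm_num
      rw [this]
      gcongr
      linarith
    have h8 : Real.log 8 ≤ 3 := by
      have e : (8 : ℝ) = 2 ^ 3 := by norm_num
      rw [e, Real.log_pow]
      have := Real.log_two_lt_d9
      push_cast
      linarith
    calc _ ≤ Real.log (8 * (C / (1 - u))) := Real.log_le_log (by positivity) h1
      _ = Real.log 8 + Λ := Real.log_mul (by norm_num) (by positivity)
      _ ≤ _ := by linarith
  have hφ'π : φ' ≤ Real.pi := by linarith [hqδ q' hq'.2]
  have hc : ‖(2 * (Real.pi : ℂ) * Complex.I)⁻¹‖ = (2 * Real.pi)⁻¹ := by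
    rw [norm_inv, norm_mul, norm_mul, Complex.norm_I, Complex.norm_real,
      Real.norm_of_nonneg hπ.le]
    simp
  rw [norm_smul, hc, hsum]
  have htri : ‖I2 + (I4 + J1) - (I3 + J2)‖ ≤ ‖I2‖ + ‖I4 + J1‖ + ‖I3 + J2‖ :=
    (norm_sub_le _ _).trans (by gcongr; exact norm_add_le _ _)
  rw [hq1] at hk1 hk2 harcb
  have hb2 : ‖I2‖ ≤ 2 * K * 3 * (2 * Real.pi) := by
    refine harcb.trans ?_
    rw [sub_neg_eq_add, abs_of_pos (by linarith)]
    have := Real.exp_one_lt_d9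
    gcongr <;> linarith
  have hb3 : 2 * K * Real.log ((1 + s) / s) ≤ 2 * K * (3 + Λ) := by gcongr
  have htot : ‖I2 + (I4 + J1) - (I3 + J2)‖ ≤ (2 * Real.pi) * (12 * K * (1 + Λ)) := by
    have hπ3 := Real.pi_gt_three
    have hKΛ : 0 ≤ K * Λ := mul_nonneg hK0 hΛ0
    have e1 : K * 3 ≤ K * Real.pi := by gcongr
    have e2 : K * Λ * 3 ≤ K * Λ * Real.pi := by gcongr
    have : 0 ≤ K * Λ * Real.pi := by positivity
    nlinarith
  calc (2 * Real.pi)⁻¹ * ‖I2 + (I4 + J1) - (I3 + J2)‖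
      ≤ (2 * Real.pi)⁻¹ * ((2 * Real.pi) * (12 * K * (1 + Λ))) := by gcongr
    _ = _ := by field_simp
end

section
/- Let A be the infinitesimal generator of a C₀-semigroup (T(t))_{t≥0} on a complex Banach space X with ‖T(t)‖ ≤ M for all t ≥ 0, where M ≥ 1. Suppose there exists a constant C ≥ 1 such that is ∈ ρ(A) for all real s ≠ 0 and ‖R(is,A)‖ ≤ C/|s|. Then there exist universal constants c₁, c₂ > 0 such that A generates a bounded holomorphic semigroup extending (T(t)) on the sector {z ∈ ℂ∖{0} : |arg z| ≤ c₁/(CM)}, and on this sector ‖T(z)‖ ≤ c₂ · CM · (1 + log(CM)). -/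
open Filter Topology

universe u

/-- A strongly continuous one-parameter semigroup of bounded operators on a complex
Banach space. -/
def IsC0Semigroup {X : Type u} [NormedAddCommGroup X] [NormedSpace ℂ X]
    (T : ℝ → X →L[ℂ] X) : Prop :=
  T 0 = 1 ∧ (∀ s t : ℝ, 0 ≤ s → 0 ≤ t → T (s + t) = (T s).comp (T t)) ∧
    ∀ x : X, Tendsto (fun t => T t x) (nhdsWithin 0 (Set.Ioi 0)) (nhds x)

/-- `A` (with domain `dom`) is the infinitesimal generator of the semigroup `T`. -/
def IsGenerator {X : Type u} [NormedAddCommGroup X] [NormedSpace ℂ X]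
    (T : ℝ → X →L[ℂ] X) (dom : Set X) (A : X → X) : Prop :=
  (∀ x : X, x ∈ dom ↔ ∃ y : X,
      Tendsto (fun h : ℝ => (h : ℂ)⁻¹ • (T h x - x)) (nhdsWithin 0 (Set.Ioi 0)) (nhds y)) ∧
    ∀ x ∈ dom,
      Tendsto (fun h : ℝ => (h : ℂ)⁻¹ • (T h x - x)) (nhdsWithin 0 (Set.Ioi 0)) (nhds (A x))

namespace Stmt2Aux

section Resolvent

variable {X : Type u} [NormedAddCommGroup X] [NormedSpace ℂ X] {dom : Set X} {A : X → X}

theorem resolvent_ident {l m : ℂ} {P Q : X →L[ℂ] X} (hP : IsResolventAt dom A l P)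
    (hQ : IsResolventAt dom A m Q) : P - Q = (m - l) • (P * Q) := by
  ext y
  have h1 := hQ.2.1 y
  have h2 := hP.2.2 (Q y) (hQ.1 y)
  have h3 : l • Q y - A (Q y) = (l - m) • Q y + y := by
    have h5 : A (Q y) = m • Q y - y := by rw [eq_sub_iff_add_eq, ← eq_sub_iff_add_eq', h1]
    rw [h5]
    module
  rw [h3, map_add, map_smul] at h2
  simp only [sub_apply, smul_apply,
    mul_apply_eq_comp]
  conv_lhs => rw [← h2]
  have h4 : P y - ((l - m) • P (Q y) + P y) = (m - l) • P (Q y) := by module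
  rw [← h4]

theorem resolvent_neumann [CompleteSpace X] {l d : ℂ} {R : X →L[ℂ] X}
    (hR : IsResolventAt dom A l R) (hd : ‖d‖ * ‖R‖ ≤ 1 / 2) :
    ∃ R' : X →L[ℂ] X, IsResolventAt dom A (l + d) R' ∧ ‖R'‖ ≤ 2 * ‖R‖ := by
  have hn : ‖-(d • R)‖ < 1 := by
    rw [norm_neg, norm_smul]; linarith
  set U := Units.oneSub (-(d • R)) hn with hU
  have hUv : (U : X →L[ℂ] X) = 1 + d • R := by simp [hU]
  set N : X →L[ℂ] X := ((U⁻¹ : (X →L[ℂ] X)ˣ) : X →L[ℂ] X) with hN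
  have h1 : (1 + d • R) * N = 1 := by rw [← hUv]; exact U.mul_inv
  have h2 : N * (1 + d • R) = 1 := by rw [← hUv]; exact U.inv_mul
  have hc : R * N = N * R := by
    have : N * ((1 + d • R) * R) * N = N * (R * (1 + d • R)) * N := by
      congr 2
      simp [add_mul, mul_add]
    rw [← mul_assoc, h2, one_mul, ← mul_assoc, mul_assoc (N * R), h1, mul_one] at this
    exact this
  refine ⟨R * N, ⟨fun y => hR.1 _, fun y => ?_, fun x hx => ?_⟩, ?_⟩
  · have := hR.2.1 (N y)
    have h3 : (1 + d • R) (N y) = y := by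
      have := congrArg (fun Q : X →L[ℂ] X => Q y) h1
      simpa using this
    simp only [add_apply, one_apply_eq_self,
      smul_apply] at h3
    rw [mul_apply_eq_comp]
    conv_rhs => rw [← h3]
    conv_rhs => rw [← this]
    rw [this]
    nth_rewrite 3 [← this]
    module
  · rw [hc, mul_apply_eq_comp]
    have h3 : (l + d) • x - A x = (l • x - A x) + d • x := by module
    rw [h3, map_add, hR.2.2 x hx]
    have := congrArg (fun Q : X →L[ℂ] X => Q x) h2
    simpa using this
  · have h3 : N = 1 - (d • R) * N := by
      rw [← h1]; simp [add_mul]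
    have h4 : R * N = R - (d • R) * (R * N) := by
      conv_lhs => rw [h3]
      rw [mul_sub, mul_one]
      simp
    have h5 : ‖R * N‖ ≤ ‖R‖ + ‖d‖ * ‖R‖ * ‖R * N‖ := by
      conv_lhs => rw [h4]
      refine (norm_sub_le _ _).trans ?_
      gcongr
      refine (norm_mul_le _ _).trans ?_
      rw [norm_smul]
    nlinarith [norm_nonneg (R * N)]

/-- the double cone around the imaginary axis -/
def W (C : ℝ) : Set ℂ := {l | 2 * C * |l.re| < |l.im|}

theorem isOpen_W (C : ℝ) : IsOpen (W C) := by
  unfold W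
  refine isOpen_lt ?_ ?_ <;> fun_prop

theorem W_im_pos {C : ℝ} (hC : 1 ≤ C) {l : ℂ} (hl : l ∈ W C) : 0 < |l.im| := by
  have : 2 * C * |l.re| < |l.im| := hl
  have h0 := abs_nonneg l.re
  nlinarith [mul_nonneg (by linarith : 0 ≤ 2 * C) h0]

theorem exists_resolvent [CompleteSpace X] {C : ℝ} (hC : 1 ≤ C)
    (h : ∀ s : ℝ, s ≠ 0 → ∃ R : X →L[ℂ] X,
        IsResolventAt dom A ((s : ℂ) * Complex.I) R ∧ ‖R‖ ≤ C / |s|) :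
    ∃ G : ℂ → X →L[ℂ] X, ∀ l ∈ W C, IsResolventAt dom A l (G l) ∧ ‖G l‖ ≤ 2 * C / |l.im| := by
  have : ∀ l : ℂ, ∃ R : X →L[ℂ] X, l ∈ W C →
      IsResolventAt dom A l R ∧ ‖R‖ ≤ 2 * C / |l.im| := by
    intro l
    by_cases hl : l ∈ W C
    · have hpos := W_im_pos hC hl
      have hlt : 2 * C * |l.re| < |l.im| := hl
      obtain ⟨R, hR, hRn⟩ := h l.im (abs_pos.mp hpos)
      obtain ⟨R', h1, h2⟩ := resolvent_neumann (d := (l.re : ℂ)) hR (by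
        rw [Complex.norm_real, Real.norm_eq_abs]
        calc |l.re| * ‖R‖ ≤ |l.re| * (C / |l.im|) := by gcongr
          _ ≤ 1 / 2 := by
            rw [mul_div_assoc', div_le_div_iff₀ hpos (by norm_num)]
            nlinarith)
      refine ⟨R', fun _ => ⟨?_, ?_⟩⟩
      · rwa [add_comm, Complex.re_add_im] at h1
      · rw [mul_div_assoc]; linarith
    · exact ⟨0, fun h => absurd h hl⟩
  choose G hG using this
  exact ⟨G, hG⟩

theorem hasDerivAt_resolvent {C : ℝ} (hC : 1 ≤ C) {G : ℂ → X →L[ℂ] X}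
    (hG : ∀ l ∈ W C, IsResolventAt dom A l (G l) ∧ ‖G l‖ ≤ 2 * C / |l.im|)
    {l : ℂ} (hl : l ∈ W C) : HasDerivAt G (-(G l * G l)) l := by
  have hev : ∀ᶠ m in 𝓝 l, m ∈ W C := (isOpen_W C).mem_nhds hl
  have hpos := W_im_pos hC hl
  have hbd : ∀ᶠ m : ℂ in 𝓝 l, 2 * C / |m.im| < 2 * C / |l.im| + 1 := by
    have : ContinuousAt (fun m : ℂ => 2 * C / |m.im|) l := by
      refine ContinuousAt.div ?_ ?_ hpos.ne' <;> fun_prop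
    exact this.eventually_lt_const (by linarith)
  have hcont : ContinuousAt G l := by
    rw [ContinuousAt, tendsto_iff_norm_sub_tendsto_zero]
    have hz : Tendsto (fun m : ℂ => ‖l - m‖ * ((2 * C / |l.im| + 1) * ‖G l‖)) (𝓝 l) (𝓝 0) := by
      have : Tendsto (fun m : ℂ => ‖l - m‖ * ((2 * C / |l.im| + 1) * ‖G l‖)) (𝓝 l)
        (𝓝 (‖l - l‖ * ((2 * C / |l.im| + 1) * ‖G l‖))) := by
        apply Continuous.tendsto (f := fun m : ℂ => ‖l - m‖ * ((2 * C / |l.im| + 1) * ‖G l‖))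
        fun_prop
      simpa using this
    refine squeeze_zero' (Eventually.of_forall fun _ => norm_nonneg _) ?_ hz
    filter_upwards [hev, hbd] with m hm hb
    rw [resolvent_ident (hG m hm).1 (hG l hl).1, norm_smul]
    gcongr
    refine (norm_mul_le _ _).trans ?_
    gcongr
    exact (hG m hm).2.trans hb.le
  rw [hasDerivAt_iff_tendsto_slope]
  have h2 : Tendsto (fun m => -(G m * G l)) (𝓝[≠] l) (𝓝 (-(G l * G l))) := by
    have : ContinuousAt (fun m => -(G m * G l)) l := (hcont.mul continuousAt_const).neg
    exact this.tendsto.mono_left nhdsWithin_le_nhds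
  refine h2.congr' ?_
  filter_upwards [nhdsWithin_le_nhds hev, self_mem_nhdsWithin] with m hm hne
  rw [slope_def_module, resolvent_ident (hG m hm).1 (hG l hl).1, smul_smul]
  have : m - l ≠ 0 := sub_ne_zero.mpr hne
  have h3 : (m - l)⁻¹ * (l - m) = -1 := by field_simp; ring
  rw [h3]; simp

end Resolvent

section Laplace

open MeasureTheory Set

variable {X : Type u} [NormedAddCommGroup X] [NormedSpace ℂ X]

theorem norm_exp_sub_exp_le {u v : ℂ} {k : ℝ} (hu : u.re ≤ k) (hv : v.re ≤ k) :
    ‖Complex.exp u - Complex.exp v‖ ≤ Real.exp k * ‖u - v‖ := by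
  have hconv : Convex ℝ {w : ℂ | w.re ≤ k} := convex_halfSpace_re_le k
  refine hconv.norm_image_sub_le_of_norm_hasDerivWithin_le (f := Complex.exp)
    (f' := Complex.exp) (fun x _ => (Complex.hasDerivAt_exp x).hasDerivWithinAt) ?_ hv hu
  intro x hx
  rw [Complex.norm_exp]
  exact Real.exp_le_exp.mpr hx

/-- Laplace transform -/
noncomputable def Lap (f : ℝ → X) (l : ℂ) : X := ∫ τ in Ioi (0:ℝ), Complex.exp (-(l * τ)) • f τ

theorem norm_lap_integrand (l : ℂ) (τ : ℝ) : ‖Complex.exp (-(l * τ))‖ = Real.exp (-l.re * τ) := by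
  rw [Complex.norm_exp]; simp

theorem lap_integrable {f : ℝ → X} {B : ℝ} (hf : ContinuousOn f (Ioi 0))
    (hB : ∀ τ, 0 < τ → ‖f τ‖ ≤ B) {l : ℂ} (hl : 0 < l.re) :
    IntegrableOn (fun τ : ℝ => Complex.exp (-(l * τ)) • f τ) (Ioi 0) := by
  have h1 : IntegrableOn (fun τ : ℝ => Real.exp (-l.re * τ) * B) (Ioi 0) :=
    (exp_neg_integrableOn_Ioi 0 hl).mul_const B
  refine Integrable.mono' h1 ?_ ?_
  · refine ContinuousOn.aestronglyMeasurable ?_ measurableSet_Ioi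
    exact ContinuousOn.smul (by fun_prop) hf
  · refine (ae_restrict_mem measurableSet_Ioi).mono fun τ hτ => ?_
    rw [norm_smul, norm_lap_integrand]
    gcongr
    exact hB τ hτ

theorem integral_exp_neg {b : ℝ} (hb : 0 < b) : ∫ x in Ioi (0:ℝ), Real.exp (-b * x) = b⁻¹ := by
  rw [integral_exp_mul_Ioi (by linarith)]
  simp

theorem norm_lap_le {f : ℝ → X} {B : ℝ}
    (hB : ∀ τ, 0 < τ → ‖f τ‖ ≤ B) {l : ℂ} (hl : 0 < l.re) :
    ‖Lap f l‖ ≤ B / l.re := by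
  have h1 : IntegrableOn (fun τ : ℝ => Real.exp (-l.re * τ) * B) (Ioi 0) :=
    (exp_neg_integrableOn_Ioi 0 hl).mul_const B
  have h2 : ‖Lap f l‖ ≤ ∫ τ in Ioi (0:ℝ), Real.exp (-l.re * τ) * B := by
    refine norm_integral_le_of_norm_le h1 ?_
    refine (ae_restrict_mem measurableSet_Ioi).mono fun τ hτ => ?_
    rw [norm_smul, norm_lap_integrand]
    gcongr
    exact hB τ hτ
  rw [integral_mul_const, integral_exp_neg hl] at h2
  rwa [div_eq_inv_mul]

variable {T : ℝ → X →L[ℂ] X} {M : ℝ}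

theorem sg_continuousOn (hT : IsC0Semigroup T) (hM : ∀ t : ℝ, 0 ≤ t → ‖T t‖ ≤ M) (x : X) :
    ContinuousOn (fun t => T t x) (Ici 0) := by
  obtain ⟨h0, hadd, hlim⟩ := hT
  have hM0 : 0 ≤ M := (norm_nonneg _).trans (hM 0 le_rfl)
  have key : ∀ s t : ℝ, 0 ≤ s → s ≤ t → ‖T t x - T s x‖ ≤ M * ‖T (t - s) x - x‖ := by
    intro s t hs hst
    have := hadd s (t - s) hs (by linarith)
    rw [add_sub_cancel] at this
    rw [this, ContinuousLinearMap.comp_apply, ← map_sub]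
    exact (T s).le_of_opNorm_le (hM s hs) _
  rw [Metric.continuousOn_iff]
  intro b hb ε hε
  have h1 := (Metric.tendsto_nhdsWithin_nhds.mp (hlim x)) (ε / (M + 1)) (by positivity)
  obtain ⟨d, hd, h2⟩ := h1
  refine ⟨d, hd, fun a ha hab => ?_⟩
  have small : ∀ h : ℝ, 0 < h → h < d → M * ‖T h x - x‖ < ε := by
    intro h hh hhd
    have := h2 (x := h) hh (by rw [Real.dist_eq, sub_zero, abs_of_pos hh]; exact hhd)
    rw [dist_eq_norm, lt_div_iff₀ (by positivity)] at this
    nlinarith [norm_nonneg (T h x - x)]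
  rw [Real.dist_eq] at hab
  rcases lt_trichotomy a b with h | h | h
  · rw [dist_comm, dist_eq_norm]
    rw [abs_of_neg (by linarith)] at hab
    exact (key a b ha h.le).trans_lt (small _ (by linarith) (by linarith))
  · rw [h]; simpa using hε
  · rw [dist_eq_norm]
    rw [abs_of_pos (by linarith)] at hab
    exact (key b a hb h.le).trans_lt (small _ (by linarith) (by linarith))

theorem integral_Ioi_shift (g : ℝ → X) (h : ℝ) :
    ∫ τ in Ioi (0:ℝ), g (h + τ) = ∫ τ in Ioi h, g τ := by
  have := (measurePreserving_add_left (volume : Measure ℝ) h).setIntegral_preimage_emb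
    (MeasurableEquiv.addLeft h).measurableEmbedding g (Ioi h)
  rw [← this]
  congr 2
  ext y; simp

theorem lap_generator [CompleteSpace X] (hT : IsC0Semigroup T)
    (hM : ∀ t : ℝ, 0 ≤ t → ‖T t‖ ≤ M) (x : X) {l : ℂ} (hl : 0 < l.re) :
    Tendsto (fun h : ℝ => (h : ℂ)⁻¹ • (T h (Lap (fun t => T t x) l) - Lap (fun t => T t x) l))
      (𝓝[>] 0) (𝓝 (l • Lap (fun t => T t x) l - x)) := by
  have hc := sg_continuousOn hT hM x
  have hB : ∀ τ, 0 < τ → ‖T τ x‖ ≤ M * ‖x‖ := fun τ hτ => (T τ).le_of_opNorm_le (hM τ hτ.le) _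
  set y := Lap (fun t => T t x) l with hy
  set f : ℝ → X := fun τ => Complex.exp (-(l * τ)) • T τ x with hf
  have hintg : IntegrableOn f (Ioi 0) := lap_integrable (hc.mono Ioi_subset_Ici_self) hB hl
  set g : ℝ → X := fun τ => Complex.exp (-(l * (max τ 0 : ℝ))) • T (max τ 0) x with hg
  have hgc : Continuous g := by
    refine Continuous.smul (by fun_prop) ?_
    exact hc.comp_continuous (by fun_prop) (fun τ => mem_Ici.mpr (le_max_right _ _))
  have hg0 : g 0 = x := by simp [hg, hT.1]
  have hderiv : HasDerivAt (fun u => ∫ τ in (0:ℝ)..u, g τ) x 0 := by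
    have := (hgc.integral_hasStrictDerivAt 0 0).hasDerivAt
    rwa [hg0] at this
  have hsl : Tendsto (fun h : ℝ => h⁻¹ • ∫ τ in (0:ℝ)..h, g τ) (𝓝[>] 0) (𝓝 x) := by
    have := hderiv.tendsto_slope_zero_right
    simpa using this
  have hexp : HasDerivAt (fun h : ℝ => Complex.exp (l * h)) l 0 := by
    have h1 : HasDerivAt (fun h : ℝ => l * (h : ℂ)) l 0 := by
      simpa using (Complex.ofRealCLM.hasDerivAt (x := (0:ℝ))).const_mul l
    simpa using h1.cexp
  have hsl2 : Tendsto (fun h : ℝ => h⁻¹ • (Complex.exp (l * h) - 1)) (𝓝[>] 0) (𝓝 l) := by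
    have := hexp.tendsto_slope_zero_right
    simpa using this
  have hsl3 : Tendsto (fun h : ℝ => Complex.exp (l * h)) (𝓝[>] 0) (𝓝 1) := by
    have : Continuous (fun h : ℝ => Complex.exp (l * h)) := by fun_prop
    have := (this.tendsto 0).mono_left (nhdsWithin_le_nhds (s := Ioi 0))
    simpa using this
  have hlim := (hsl2.smul_const y).sub (hsl3.smul hsl)
  rw [one_smul] at hlim
  refine hlim.congr' ?_
  filter_upwards [self_mem_nhdsWithin] with h hh
  have hh : 0 < h := hh
  have e1 : T h y = ∫ τ in Ioi (0:ℝ), Complex.exp (l * h) • f (h + τ) := by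
    rw [hy, Lap, ← ContinuousLinearMap.integral_comp_comm _ hintg]
    refine setIntegral_congr_fun measurableSet_Ioi fun τ hτ => ?_
    simp only [hf, map_smul, smul_smul, ← Complex.exp_add]
    rw [hT.2.1 h τ hh.le (le_of_lt hτ), ContinuousLinearMap.comp_apply]
    congr 2
    push_cast; ring
  have e2 : y = (∫ τ in (0:ℝ)..h, g τ) + ∫ τ in Ioi h, f τ := by
    have : ∫ τ in (0:ℝ)..h, g τ = ∫ τ in (0:ℝ)..h, f τ := by
      refine intervalIntegral.integral_congr fun τ hτ => ?_
      rw [uIcc_of_le hh.le] at hτ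
      simp [hg, hf, max_eq_left hτ.1]
    rw [this, intervalIntegral.integral_of_le hh.le, ← setIntegral_union]
    · rw [Ioc_union_Ioi_eq_Ioi hh.le]; rfl
    · exact Ioc_disjoint_Ioi le_rfl
    · exact measurableSet_Ioi
    · exact hintg.mono_set Ioc_subset_Ioi_self
    · exact hintg.mono_set (Ioi_subset_Ioi hh.le)
  rw [integral_smul, integral_Ioi_shift f h] at e1
  have e3 : ∫ τ in Ioi h, f τ = y - ∫ τ in (0:ℝ)..h, g τ := by
    rw [eq_sub_iff_add_eq', ← e2]
  rw [e1, e3]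
  have cast : ∀ v : X, h⁻¹ • v = (h:ℂ)⁻¹ • v := fun v => by
    rw [← Complex.ofReal_inv, Complex.coe_smul]
  rw [cast, Complex.real_smul, Complex.ofReal_inv]
  module

theorem lap_resolvent [CompleteSpace X] (hT : IsC0Semigroup T)
    (hM : ∀ t : ℝ, 0 ≤ t → ‖T t‖ ≤ M) {dom : Set X} {A : X → X} (hA : IsGenerator T dom A)
    {m : ℂ} {R : X →L[ℂ] X} (hR : IsResolventAt dom A m R) (x : X) {l : ℂ} (hl : 0 < l.re) :
    Lap (fun t => T t x) l = R x + (m - l) • R (Lap (fun t => T t x) l) := by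
  have h1 := lap_generator hT hM x hl
  have hd : Lap (fun t => T t x) l ∈ dom := (hA.1 _).mpr ⟨_, h1⟩
  have h2 := tendsto_nhds_unique (hA.2 _ hd) h1
  have h3 := hR.2.2 _ hd
  rw [h2] at h3
  rw [← map_smul, ← map_add]
  conv_lhs => rw [← h3]
  congr 1
  module

theorem lap_bound [CompleteSpace X] (hT : IsC0Semigroup T) (hM1 : 1 ≤ M)
    (hM : ∀ t : ℝ, 0 ≤ t → ‖T t‖ ≤ M) {dom : Set X} {A : X → X} (hA : IsGenerator T dom A)
    {s : ℝ} {R : X →L[ℂ] X} (hR : IsResolventAt dom A (s * Complex.I) R) (x : X) {e : ℝ}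
    (he : 0 < e) :
    ‖Lap (fun t => T t x) (e + s * Complex.I)‖ ≤ ‖R‖ * (2 * M * ‖x‖) ∧
    ‖Lap (fun t => T t x) (e + s * Complex.I) - R x‖ ≤ e * (‖R‖ * (‖R‖ * (2 * M * ‖x‖))) := by
  have hB : ∀ τ, 0 < τ → ‖T τ x‖ ≤ M * ‖x‖ := fun τ hτ => (T τ).le_of_opNorm_le (hM τ hτ.le) _
  have hl : 0 < ((e : ℂ) + s * Complex.I).re := by simpa using he
  have h1 := lap_resolvent hT hM hA hR x hl
  have h2 := norm_lap_le hB hl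
  set y := Lap (fun t => T t x) (e + s * Complex.I)
  have hre : ((e : ℂ) + s * Complex.I).re = e := by simp
  rw [hre] at h2
  have h3 : y = R x - (e:ℂ) • R y := by
    refine h1.trans ?_
    module
  have h4 : ‖(e:ℂ) • R y‖ ≤ e * (‖R‖ * ‖y‖) := by
    rw [norm_smul, Complex.norm_real, Real.norm_of_nonneg he.le]
    gcongr
    exact R.le_opNorm y
  have h5 : e * ‖y‖ ≤ M * ‖x‖ := by
    rw [le_div_iff₀ he] at h2; linarith
  have h6 : ‖y‖ ≤ ‖R‖ * (2 * M * ‖x‖) := by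
    have : ‖y‖ ≤ ‖R x‖ + ‖(e:ℂ) • R y‖ := by
      conv_lhs => rw [h3]
      exact norm_sub_le _ _
    have h7 := R.le_opNorm x
    have h8 : ‖R‖ * (e * ‖y‖) ≤ ‖R‖ * (M * ‖x‖) := by gcongr
    have h9 : ‖R‖ * (1 * ‖x‖) ≤ ‖R‖ * (M * ‖x‖) := by gcongr
    nlinarith
  refine ⟨h6, ?_⟩
  have : y - R x = -((e:ℂ) • R y) := by
    conv_lhs => rw [h3]
    module
  rw [this, norm_neg]
  refine h4.trans ?_
  gcongr

end Laplace

section Gauss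

open MeasureTheory Set

variable {X : Type u} [NormedAddCommGroup X] [NormedSpace ℂ X]

/-- the Gaussian kernel -/
noncomputable def gk (η t τ : ℝ) : ℂ :=
  ((Real.pi : ℂ) / ((η ^ 2 : ℝ) : ℂ)) ^ (1 / 2 : ℂ) *
    Complex.exp (-((t : ℂ) - τ) ^ 2 / (4 * ((η ^ 2 : ℝ) : ℂ)))

/-- the oscillating Gaussian factor -/
noncomputable def osc (η t s : ℝ) : ℂ :=
  Complex.exp (Complex.I * t * s) * Complex.exp (-((η ^ 2 : ℝ) : ℂ) * s ^ 2)

theorem norm_osc (η t s : ℝ) : ‖osc η t s‖ = Real.exp (-(η ^ 2) * s ^ 2) := by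
  have h : (-((η ^ 2 : ℝ) : ℂ) * s ^ 2) = ((-(η ^ 2) * s ^ 2 : ℝ) : ℂ) := by push_cast; ring
  rw [osc, norm_mul, h, Complex.norm_exp, Complex.norm_exp, Complex.ofReal_re]
  simp

theorem continuous_osc (η t : ℝ) : Continuous (osc η t) := by unfold osc; fun_prop

theorem continuous_gk (η t : ℝ) : Continuous (gk η t) := by unfold gk; fun_prop

theorem gauss_integrable_prod {f : ℝ → X} {B : ℝ} (hf : ContinuousOn f (Ioi 0))
    (hB : ∀ τ, 0 < τ → ‖f τ‖ ≤ B) {e η : ℝ} (he : 0 < e) (hη : 0 < η) (t : ℝ) :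
    Integrable (Function.uncurry fun (s τ : ℝ) =>
      osc η t s • (Complex.exp (-(((e:ℂ) + s * Complex.I) * τ)) • f τ))
      ((volume : Measure ℝ).prod (volume.restrict (Ioi (0:ℝ)))) := by
  have h1 : Integrable (fun s : ℝ => Real.exp (-(η ^ 2) * s ^ 2)) :=
    integrable_exp_neg_mul_sq (by positivity)
  have h2 : IntegrableOn (fun τ : ℝ => Real.exp (-e * τ) * B) (Ioi 0) :=
    (exp_neg_integrableOn_Ioi 0 he).mul_const B
  have h3 := h1.mul_prod h2
  refine h3.mono' ?_ ?_
  · have hfm : AEStronglyMeasurable f (volume.restrict (Ioi 0)) :=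
      hf.aestronglyMeasurable measurableSet_Ioi
    have := hfm.comp_snd (μ := (volume : Measure ℝ))
    have hc : Continuous (fun p : ℝ × ℝ => osc η t p.1) := (continuous_osc η t).comp continuous_fst
    have hc2 : Continuous (fun p : ℝ × ℝ =>
      Complex.exp (-(((e:ℂ) + p.1 * Complex.I) * p.2))) := by fun_prop
    exact hc.aestronglyMeasurable.smul (hc2.aestronglyMeasurable.smul this)
  · have hae : ∀ᵐ p : ℝ × ℝ ∂((volume : Measure ℝ).prod (volume.restrict (Ioi (0:ℝ)))), 0 < p.2 := by
      exact Measure.quasiMeasurePreserving_snd.ae (ae_restrict_mem measurableSet_Ioi)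
    filter_upwards [hae] with p hp
    simp only [Function.uncurry]
    rw [norm_smul, norm_smul, norm_osc, norm_lap_integrand]
    simp only [Complex.add_re, Complex.ofReal_re, Complex.mul_re, Complex.I_re, mul_zero,
      Complex.ofReal_im, Complex.I_im, mul_one, sub_self, add_zero]
    gcongr
    exact hB _ hp

theorem gauss_integrable {f : ℝ → X} {B : ℝ} (hf : ContinuousOn f (Ioi 0))
    (hB : ∀ τ, 0 < τ → ‖f τ‖ ≤ B) {e η : ℝ} (he : 0 < e) (hη : 0 < η) (t : ℝ) :
    Integrable (fun s : ℝ => osc η t s • Lap f (e + s * Complex.I)) := by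
  have := (gauss_integrable_prod hf hB he hη t).integral_prod_left
  refine this.congr (Eventually.of_forall fun s => ?_)
  simp only [Function.uncurry]
  rw [integral_smul]; rfl

theorem gauss_fubini [CompleteSpace X] {f : ℝ → X} {B : ℝ} (hf : ContinuousOn f (Ioi 0))
    (hB : ∀ τ, 0 < τ → ‖f τ‖ ≤ B) {e η : ℝ} (he : 0 < e) (hη : 0 < η) (t : ℝ) :
    ∫ s : ℝ, osc η t s • Lap f (e + s * Complex.I) =
      ∫ τ in Ioi (0:ℝ), Real.exp (-e * τ) • (gk η t τ • f τ) := by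
  have h1 : ∀ s : ℝ, osc η t s • Lap f (e + s * Complex.I) =
      ∫ τ in Ioi (0:ℝ), osc η t s • (Complex.exp (-(((e:ℂ) + s * Complex.I) * τ)) • f τ) := by
    intro s; rw [integral_smul]; rfl
  simp_rw [h1]
  rw [integral_integral_swap (gauss_integrable_prod hf hB he hη t)]
  refine integral_congr_ae (Eventually.of_forall fun τ => ?_)
  simp only
  have h2 : ∀ s : ℝ, osc η t s • (Complex.exp (-(((e:ℂ) + s * Complex.I) * τ)) • f τ) =
     (Complex.exp (Complex.I * ((t:ℂ) - τ) * s) * Complex.exp (-((η ^ 2 : ℝ) : ℂ) * s ^ 2)) •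
       (Real.exp (-e * τ) • f τ) := by
    intro s
    rw [← Complex.coe_smul, smul_smul, smul_smul, osc, Complex.ofReal_exp]
    congr 1
    simp only [← Complex.exp_add]
    congr 1
    push_cast; ring
  simp_rw [h2]
  rw [integral_smul_const, fourierIntegral_gaussian (by rw [Complex.ofReal_re]; positivity), gk]
  rw [smul_comm]

theorem gk_integrable {f : ℝ → X} {B : ℝ} (hf : ContinuousOn f (Ioi 0))
    (hB : ∀ τ, 0 < τ → ‖f τ‖ ≤ B) {η : ℝ} (hη : 0 < η) (t : ℝ) :
    IntegrableOn (fun τ => gk η t τ • f τ) (Ioi 0) := by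
  have h0 : Integrable (gk η t) := by
    have := (integrable_cexp_quadratic (b := 1 / (4 * ((η ^ 2 : ℝ) : ℂ))) (by
      have : (1 / (4 * ((η ^ 2 : ℝ) : ℂ))) = ((1 / (4 * η ^ 2) : ℝ) : ℂ) := by push_cast; ring
      rw [this, Complex.ofReal_re]; positivity)
      (2 * t / (4 * ((η ^ 2 : ℝ) : ℂ))) (- t ^ 2 / (4 * ((η ^ 2 : ℝ) : ℂ)))).const_mul
      (((Real.pi : ℂ) / ((η ^ 2 : ℝ) : ℂ)) ^ (1 / 2 : ℂ))
    refine this.congr (Eventually.of_forall fun τ => ?_)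
    simp only [gk]
    congr 2
    ring
  refine (h0.norm.mul_const B).integrableOn.mono' ?_ ?_
  · exact ((continuous_gk η t).continuousOn.smul hf).aestronglyMeasurable measurableSet_Ioi
  · refine (ae_restrict_mem measurableSet_Ioi).mono fun τ hτ => ?_
    rw [norm_smul]
    gcongr
    exact hB _ hτ

theorem gauss_limit [CompleteSpace X] {f : ℝ → X} {B : ℝ} (hf : ContinuousOn f (Ioi 0))
    (hB : ∀ τ, 0 < τ → ‖f τ‖ ≤ B) {r : ℝ → X} {D : ℝ}
    (hr : ∀ s : ℝ, s ≠ 0 → Tendsto (fun e : ℝ => Lap f (e + s * Complex.I)) (𝓝[>] 0) (𝓝 (r s)))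
    (hD : ∀ e s : ℝ, 0 < e → s ≠ 0 → ‖Lap f (e + s * Complex.I)‖ ≤ D / |s|)
    {η : ℝ} (hη : 0 < η) (t t' : ℝ) :
    ∫ s : ℝ, (osc η t s - osc η t' s) • r s =
      (∫ τ in Ioi (0:ℝ), gk η t τ • f τ) - ∫ τ in Ioi (0:ℝ), gk η t' τ • f τ := by
  have hne : ∀ᵐ s : ℝ, s ≠ 0 := by
    simp [ae_iff, measure_singleton]
  have hL : Tendsto (fun e : ℝ => ∫ s : ℝ, (osc η t s - osc η t' s) • Lap f (e + s * Complex.I))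
      (𝓝[>] 0) (𝓝 (∫ s : ℝ, (osc η t s - osc η t' s) • r s)) := by
    refine tendsto_integral_filter_of_dominated_convergence
      (fun s => Real.exp (-(η ^ 2) * s ^ 2) * (|t - t'| * D)) ?_ ?_ ?_ ?_
    · filter_upwards [self_mem_nhdsWithin] with e he
      have := (gauss_integrable hf hB he hη t).sub (gauss_integrable hf hB he hη t')
      refine this.aestronglyMeasurable.congr (Eventually.of_forall fun s => ?_)
      simp [sub_smul]
    · filter_upwards [self_mem_nhdsWithin] with e he
      filter_upwards [hne] with s hs
      have hs' : 0 < |s| := abs_pos.mpr hs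
      have h1 : ‖osc η t s - osc η t' s‖ ≤ Real.exp (-(η ^ 2) * s ^ 2) * (|t - t'| * |s|) := by
        have h2 : ‖Complex.exp (Complex.I * t * s) - Complex.exp (Complex.I * t' * s)‖ ≤
            |t - t'| * |s| := by
          have := norm_exp_sub_exp_le (u := Complex.I * t * s) (v := Complex.I * t' * s) (k := 0)
            (by simp) (by simp)
          rw [Real.exp_zero, one_mul] at this
          refine this.trans (le_of_eq ?_)
          have h3 : Complex.I * t * s - Complex.I * t' * s =
            Complex.I * (((t - t') * s : ℝ) : ℂ) := by push_cast; ring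
          rw [h3, norm_mul, Complex.norm_I, one_mul, Complex.norm_real, Real.norm_eq_abs, abs_mul]
        have h3 : ‖Complex.exp (-((η ^ 2 : ℝ) : ℂ) * s ^ 2)‖ = Real.exp (-(η ^ 2) * s ^ 2) := by
          have h : (-((η ^ 2 : ℝ) : ℂ) * s ^ 2) = ((-(η ^ 2) * s ^ 2 : ℝ) : ℂ) := by push_cast; ring
          rw [h, Complex.norm_exp, Complex.ofReal_re]
        rw [osc, osc, ← sub_mul, norm_mul, h3, mul_comm]
        gcongr
      rw [norm_smul]
      calc _ ≤ (Real.exp (-(η ^ 2) * s ^ 2) * (|t - t'| * |s|)) * (D / |s|) := by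
            gcongr
            exact hD e s he hs
        _ = _ := by field_simp
    · exact (integrable_exp_neg_mul_sq (by positivity)).mul_const _
    · filter_upwards [hne] with s hs
      exact (hr s hs).const_smul _
  have hRt : ∀ t : ℝ, Tendsto (fun e : ℝ => ∫ τ in Ioi (0:ℝ), Real.exp (-e * τ) • (gk η t τ • f τ))
      (𝓝[>] 0) (𝓝 (∫ τ in Ioi (0:ℝ), gk η t τ • f τ)) := by
    intro t
    have hi := gk_integrable hf hB hη t
    refine tendsto_integral_filter_of_dominated_convergence (fun τ => ‖gk η t τ • f τ‖) ?_ ?_ ?_ ?_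
    · refine Eventually.of_forall fun e => ?_
      have : Continuous fun τ : ℝ => Real.exp (-e * τ) := by fun_prop
      exact this.aestronglyMeasurable.smul hi.aestronglyMeasurable
    · filter_upwards [self_mem_nhdsWithin] with e he
      refine (ae_restrict_mem measurableSet_Ioi).mono fun τ hτ => ?_
      rw [norm_smul, Real.norm_of_nonneg (Real.exp_pos _).le]
      have he : 0 < e := he
      have hτ : 0 < τ := hτ
      have : Real.exp (-e * τ) ≤ 1 := Real.exp_le_one_iff.mpr (by nlinarith)
      exact mul_le_of_le_one_left (norm_nonneg _) this
    · exact hi.norm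
    · refine Eventually.of_forall fun τ => ?_
      have : Continuous fun e : ℝ => Real.exp (-e * τ) • (gk η t τ • f τ) := by fun_prop
      have := (this.tendsto 0).mono_left (nhdsWithin_le_nhds (s := Ioi 0))
      simpa using this
  have hR := (hRt t).sub (hRt t')
  refine tendsto_nhds_unique hL (hR.congr' ?_)
  filter_upwards [self_mem_nhdsWithin] with e he
  rw [← gauss_fubini hf hB he hη t, ← gauss_fubini hf hB he hη t', ← integral_sub
    (gauss_integrable hf hB he hη t) (gauss_integrable hf hB he hη t')]
  simp_rw [sub_smul]

theorem gk_scaled {η : ℝ} (hη : 0 < η) (t v : ℝ) :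
    (η : ℂ) * gk η t (η * v + t) = ((Real.sqrt Real.pi * Real.exp (-(1 / 4) * v ^ 2) : ℝ) : ℂ) := by
  have h1 : ((Real.pi : ℂ) / ((η ^ 2 : ℝ) : ℂ)) ^ (1 / 2 : ℂ) = ((Real.sqrt Real.pi / η : ℝ) : ℂ) := by
    rw [← Complex.ofReal_div]
    have : (1 / 2 : ℂ) = ((1 / 2 : ℝ) : ℂ) := by push_cast; ring
    rw [this, ← Complex.ofReal_cpow (by positivity), ← Real.sqrt_eq_rpow,
      Real.sqrt_div Real.pi_pos.le, Real.sqrt_sq hη.le]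
  have hη' : (η : ℂ) ≠ 0 := by exact_mod_cast hη.ne'
  have h2 : -((t : ℂ) - ((η * v + t : ℝ) : ℂ)) ^ 2 / (4 * ((η ^ 2 : ℝ) : ℂ)) =
      ((-(1 / 4) * v ^ 2 : ℝ) : ℂ) := by
    push_cast
    field_simp
    ring
  rw [gk, h1, h2]
  push_cast
  field_simp

theorem gk_tendsto [CompleteSpace X] {f : ℝ → X} {B : ℝ} (hf : ContinuousOn f (Ioi 0))
    (hB : ∀ τ, 0 < τ → ‖f τ‖ ≤ B) {t : ℝ} (ht : 0 < t) :
    Tendsto (fun η : ℝ => ∫ τ in Ioi (0:ℝ), gk η t τ • f τ) (𝓝[>] 0)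
      (𝓝 ((2 * Real.pi) • f t)) := by
  have hB0 : 0 ≤ B := (norm_nonneg _).trans (hB t ht)
  set g : ℝ → X := (Ioi (0:ℝ)).indicator f with hg
  have hgB : ∀ τ, ‖g τ‖ ≤ B := by
    intro τ
    by_cases h : τ ∈ Ioi (0:ℝ)
    · rw [hg, indicator_of_mem h]; exact hB _ h
    · rw [hg, indicator_of_notMem h]; simpa using hB0
  have e1 : ∀ η : ℝ, 0 < η → ∫ τ in Ioi (0:ℝ), gk η t τ • f τ =
      ∫ v : ℝ, (Real.sqrt Real.pi * Real.exp (-(1 / 4) * v ^ 2)) • g (η * v + t) := by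
    intro η hη
    have h1 : ∫ τ in Ioi (0:ℝ), gk η t τ • f τ = ∫ τ, gk η t τ • g τ := by
      rw [← integral_indicator measurableSet_Ioi]
      congr 1
      ext τ
      rw [hg]
      by_cases h : τ ∈ Ioi (0:ℝ)
      · simp [indicator_of_mem h]
      · simp [indicator_of_notMem h]
    rw [h1, ← integral_add_right_eq_self _ t]
    have h2 := Measure.integral_comp_mul_left (fun τ => gk η t (τ + t) • g (τ + t)) η
    have h3 : ∫ τ, gk η t (τ + t) • g (τ + t) =
        η • ∫ v, gk η t (η * v + t) • g (η * v + t) := by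
      rw [h2, abs_of_pos (by positivity), smul_smul, mul_inv_cancel₀ hη.ne', one_smul]
    rw [h3, ← integral_smul]
    congr 1
    ext v
    rw [← Complex.coe_smul η, smul_smul, gk_scaled hη, Complex.coe_smul]
  have e2 : ∫ v : ℝ, (Real.sqrt Real.pi * Real.exp (-(1 / 4) * v ^ 2)) • f t =
      (2 * Real.pi) • f t := by
    rw [integral_smul_const, integral_const_mul, integral_gaussian]
    congr 1
    rw [← Real.sqrt_mul Real.pi_pos.le]
    have : Real.pi * (Real.pi / (1 / 4)) = (2 * Real.pi) ^ 2 := by ring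
    rw [this, Real.sqrt_sq (by positivity)]
  have hmain : Tendsto (fun η : ℝ =>
      ∫ v : ℝ, (Real.sqrt Real.pi * Real.exp (-(1 / 4) * v ^ 2)) • g (η * v + t)) (𝓝[>] 0)
      (𝓝 ((2 * Real.pi) • f t)) := by
    rw [← e2]
    refine tendsto_integral_filter_of_dominated_convergence
      (fun v => (Real.sqrt Real.pi * Real.exp (-(1 / 4) * v ^ 2)) * B) ?_ ?_ ?_ ?_
    · filter_upwards with η
      have hc : Continuous fun v : ℝ => Real.sqrt Real.pi * Real.exp (-(1 / 4) * v ^ 2) := by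
        fun_prop
      refine hc.aestronglyMeasurable.smul ?_
      have hopen : MeasurableSet {v : ℝ | 0 < η * v + t} :=
        (isOpen_lt continuous_const (by fun_prop)).measurableSet
      have h1 : (fun v : ℝ => g (η * v + t)) =
          {v : ℝ | 0 < η * v + t}.indicator (fun v => f (η * v + t)) := by
        ext v
        simp [hg, indicator_apply]
      rw [h1, aestronglyMeasurable_indicator_iff hopen]
      refine ContinuousOn.aestronglyMeasurable ?_ hopen
      exact hf.comp (by fun_prop) (fun v hv => hv)
    · filter_upwards with η
      filter_upwards with v
      rw [norm_smul, Real.norm_of_nonneg (by positivity)]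
      gcongr
      exact hgB _
    · exact ((integrable_exp_neg_mul_sq (by norm_num)).const_mul _).mul_const _
    · filter_upwards with v
      refine Tendsto.const_smul ?_ _
      have h1 : Tendsto (fun η : ℝ => η * v + t) (𝓝[>] 0) (𝓝 t) := by
        have : Continuous fun η : ℝ => η * v + t := by fun_prop
        have := (this.tendsto 0).mono_left (nhdsWithin_le_nhds (s := Ioi 0))
        simpa using this
      have h2 : Tendsto f (𝓝 t) (𝓝 (f t)) := (hf.continuousAt (Ioi_mem_nhds ht))
      refine (h2.comp h1).congr' ?_
      filter_upwards [h1.eventually (Ioi_mem_nhds ht)] with η hη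
      have hη : η * v + t ∈ Ioi (0:ℝ) := hη
      simp [hg, indicator_of_mem hη]
  refine hmain.congr' ?_
  filter_upwards [self_mem_nhdsWithin] with η hη
  exact (e1 η hη).symm

end Gauss

section Contour

open MeasureTheory Set

variable {X : Type u} [NormedAddCommGroup X] [NormedSpace ℂ X]

/-- direction of a ray -/
noncomputable def wr (σ a : ℝ) : ℂ := -(a : ℂ) + σ * Complex.I

theorem wr_re (σ a : ℝ) : (wr σ a).re = -a := by simp [wr]
theorem wr_im (σ a : ℝ) : (wr σ a).im = σ := by simp [wr]

theorem norm_wr_le {σ a : ℝ} (hσ : |σ| = 1) (ha : |a| ≤ 1 / 2) : ‖wr σ a‖ ≤ 2 := by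
  refine (Complex.norm_le_abs_re_add_abs_im _).trans ?_
  rw [wr_re, wr_im, abs_neg, hσ]; linarith

theorem ray_mem_W {C σ a r : ℝ} (hσ : |σ| = 1) (ha : 2 * C * |a| < 1) (hr : 0 < r) :
    (r : ℂ) * wr σ a ∈ W C := by
  change 2 * C * |((r : ℂ) * wr σ a).re| < |((r : ℂ) * wr σ a).im|
  rw [Complex.re_ofReal_mul, Complex.im_ofReal_mul, wr_re, wr_im, abs_mul, abs_mul, abs_neg, hσ,
    abs_of_pos hr]
  nlinarith

theorem ray_im {σ a r : ℝ} (hσ : |σ| = 1) (hr : 0 < r) : |((r : ℂ) * wr σ a).im| = r := by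
  rw [Complex.im_ofReal_mul, wr_im, abs_mul, hσ, abs_of_pos hr, mul_one]

/-- the regularised exponential difference -/
noncomputable def ee (η t t' : ℝ) (l : ℂ) : ℂ :=
  (Complex.exp (l * t) - Complex.exp (l * t')) * Complex.exp ((η : ℂ) ^ 2 * l ^ 2)

/-- its derivative -/
noncomputable def ee' (η t t' : ℝ) (l : ℂ) : ℂ :=
  (Complex.exp (l * t) * t - Complex.exp (l * t') * t') * Complex.exp ((η : ℂ) ^ 2 * l ^ 2) +
   2 * (η : ℂ) ^ 2 * l * ee η t t' l

theorem hasDerivAt_ee (η t t' : ℝ) (l : ℂ) : HasDerivAt (ee η t t') (ee' η t t' l) l := by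
  have h1 : ∀ t : ℝ, HasDerivAt (fun l : ℂ => Complex.exp (l * t)) (Complex.exp (l * t) * t) l := by
    intro t
    have := ((hasDerivAt_id l).mul_const (t : ℂ)).cexp
    simpa using this
  have h2 : HasDerivAt (fun l : ℂ => Complex.exp ((η : ℂ) ^ 2 * l ^ 2))
      (Complex.exp ((η : ℂ) ^ 2 * l ^ 2) * ((η : ℂ) ^ 2 * (2 * l))) l := by
    have := ((hasDerivAt_pow 2 l).const_mul ((η : ℂ) ^ 2)).cexp
    simpa using this
  have := ((h1 t).sub (h1 t')).mul h2
  refine this.congr_deriv ?_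
  simp only [ee', ee, Pi.sub_apply]
  ring

theorem continuous_ee (η t t' : ℝ) : Continuous (ee η t t') := by unfold ee; fun_prop
theorem continuous_ee' (η t t' : ℝ) : Continuous (ee' η t t') := by unfold ee' ee; fun_prop

/-- dominating exponential -/
noncomputable def qq (η b r : ℝ) : ℝ := Real.exp (b * r - 3 / 4 * η ^ 2 * r ^ 2)

theorem qq_pos (η b r : ℝ) : 0 < qq η b r := Real.exp_pos _

theorem norm_gaussfactor_le {η σ a r : ℝ} (hσ : |σ| = 1) (ha : |a| ≤ 1 / 2) :
    ‖Complex.exp ((η : ℂ) ^ 2 * ((r : ℂ) * wr σ a) ^ 2)‖ ≤ Real.exp (-(3 / 4 * η ^ 2 * r ^ 2)) := by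
  rw [Complex.norm_exp]
  have hs : σ ^ 2 = 1 := by rw [← sq_abs, hσ]; norm_num
  have ha2 : a ^ 2 ≤ 1 / 4 := by
    rw [← sq_abs]; nlinarith [abs_nonneg a]
  have : ((η : ℂ) ^ 2 * ((r : ℂ) * wr σ a) ^ 2).re = η ^ 2 * r ^ 2 * (a ^ 2 - σ ^ 2) := by
    have h : (η : ℂ) ^ 2 * ((r : ℂ) * wr σ a) ^ 2 =
        ((η ^ 2 * r ^ 2 : ℝ) : ℂ) * (wr σ a * wr σ a) := by push_cast; ring
    rw [h, Complex.re_ofReal_mul, Complex.mul_re, wr_re, wr_im]; ring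
  rw [this, hs]
  apply Real.exp_le_exp.mpr
  have : 0 ≤ η ^ 2 * r ^ 2 := by positivity
  nlinarith

theorem ray_mul_re {σ a r t : ℝ} : ((r : ℂ) * wr σ a * t).re = -(r * a * t) := by
  rw [mul_assoc, Complex.re_ofReal_mul, Complex.re_mul_ofReal, wr_re]; ring

theorem ray_re_le {σ a r t t' : ℝ} (ha : |a| ≤ 1 / 2) (hr : 0 < r) (ht : 0 < t) (ht' : 0 < t') :
    ((r : ℂ) * wr σ a * t).re ≤ (t + t') * r := by
  rw [ray_mul_re]
  have h1 : -a ≤ 1 := by linarith [neg_abs_le a]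
  have : r * t * (-a) ≤ r * t * 1 := by gcongr
  nlinarith [mul_pos hr ht']

theorem norm_ray_le {σ a r : ℝ} (hσ : |σ| = 1) (ha : |a| ≤ 1 / 2) (hr : 0 < r) :
    ‖(r : ℂ) * wr σ a‖ ≤ 2 * r := by
  rw [norm_mul, Complex.norm_real, Real.norm_of_nonneg hr.le]
  nlinarith [norm_wr_le hσ ha]

theorem norm_ee_le {η t t' σ a r : ℝ} (hσ : |σ| = 1) (ha : |a| ≤ 1 / 2) (hr : 0 < r)
    (ht : 0 < t) (ht' : 0 < t') :
    ‖ee η t t' ((r : ℂ) * wr σ a)‖ ≤ 2 * r * (t + t') * qq η (t + t') r := by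
  have h1 := norm_exp_sub_exp_le (ray_re_le (σ := σ) ha hr ht ht')
    (by rw [add_comm]; exact ray_re_le (σ := σ) ha hr ht' ht)
  rw [ee, norm_mul, qq, sub_eq_add_neg (_ * r), Real.exp_add]
  have h2 := norm_gaussfactor_le (η := η) (r := r) hσ ha
  have h3 : ‖(r : ℂ) * wr σ a * t - (r : ℂ) * wr σ a * t'‖ ≤ 2 * r * (t + t') := by
    rw [← mul_sub, norm_mul, ← Complex.ofReal_sub, Complex.norm_real, Real.norm_eq_abs]
    gcongr
    · exact norm_ray_le hσ ha hr
    · rw [abs_le]; constructor <;> linarith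
  calc _ ≤ (Real.exp ((t + t') * r) * (2 * r * (t + t'))) * Real.exp (-(3 / 4 * η ^ 2 * r ^ 2)) := by
        gcongr
        exact h1.trans (by gcongr)
    _ = _ := by ring

theorem norm_ee'_le {η t t' σ a r : ℝ} (hσ : |σ| = 1) (ha : |a| ≤ 1 / 2) (hr : 0 < r)
    (ht : 0 < t) (ht' : 0 < t') :
    ‖ee' η t t' ((r : ℂ) * wr σ a)‖ ≤ (t + t') * (1 + 8 * η ^ 2 * r ^ 2) * qq η (t + t') r := by
  have h2 := norm_gaussfactor_le (η := η) (r := r) hσ ha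
  have h3 := norm_ee_le (η := η) hσ ha hr ht ht'
  have e1 : ∀ t t' : ℝ, 0 < t → 0 < t' → ‖Complex.exp ((r : ℂ) * wr σ a * t) * t‖ ≤
      Real.exp ((t + t') * r) * t := by
    intro t t' ht ht'
    rw [norm_mul, Complex.norm_real, Real.norm_of_nonneg ht.le, Complex.norm_exp]
    gcongr
    exact ray_re_le ha hr ht ht'
  have e3 := e1 t' t ht' ht
  rw [add_comm t' t] at e3
  have h4 : ‖(Complex.exp ((r : ℂ) * wr σ a * t) * t - Complex.exp ((r : ℂ) * wr σ a * t') * t') *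
      Complex.exp ((η : ℂ) ^ 2 * ((r : ℂ) * wr σ a) ^ 2)‖ ≤ (t + t') * qq η (t + t') r := by
    rw [norm_mul, qq, sub_eq_add_neg (_ * r), Real.exp_add]
    calc _ ≤ (Real.exp ((t + t') * r) * t + Real.exp ((t + t') * r) * t') *
            Real.exp (-(3 / 4 * η ^ 2 * r ^ 2)) := by
          gcongr
          refine (norm_sub_le _ _).trans ?_
          gcongr
          exact e1 t t' ht ht'
      _ = _ := by ring
  have h5 : ‖2 * (η : ℂ) ^ 2 * ((r : ℂ) * wr σ a) * ee η t t' ((r : ℂ) * wr σ a)‖ ≤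
      2 * η ^ 2 * (2 * r) * (2 * r * (t + t') * qq η (t + t') r) := by
    rw [norm_mul, norm_mul]
    gcongr
    · have : (2 * (η : ℂ) ^ 2) = ((2 * η ^ 2 : ℝ) : ℂ) := by push_cast; ring
      rw [this, Complex.norm_real, Real.norm_of_nonneg (by positivity)]
    · exact norm_ray_le hσ ha hr
  rw [ee']
  refine (norm_add_le _ _).trans ((add_le_add h4 h5).trans (le_of_eq ?_))
  ring

theorem qq_shift {η b r : ℝ} (hr : 0 < r) : (1 + r ^ 2) * qq η b r ≤ 2 * qq η (b + 1) r := by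
  have h1 : 1 + r ^ 2 ≤ 2 * Real.exp r := by
    have := Real.quadratic_le_exp_of_nonneg hr.le
    linarith
  have h2 : qq η (b + 1) r = Real.exp r * qq η b r := by
    rw [qq, qq, ← Real.exp_add]; congr 1; ring
  rw [h2, ← mul_assoc]
  gcongr
  exact (qq_pos _ _ _).le

theorem qq_integrable {η b : ℝ} (hη : 0 < η) : Integrable (qq η b) := by
  have h := (integrable_cexp_quadratic (b := ((3 / 4 * η ^ 2 : ℝ) : ℂ))
    (by rw [Complex.ofReal_re]; positivity) (b : ℂ) 0).norm
  refine h.congr (Eventually.of_forall fun r => ?_)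
  simp only [qq]
  have : (-((3 / 4 * η ^ 2 : ℝ) : ℂ) * (r:ℂ) ^ 2 + b * r + 0) =
    ((b * r - 3 / 4 * η ^ 2 * r ^ 2 : ℝ) : ℂ) := by push_cast; ring
  rw [this, Complex.norm_exp, Complex.ofReal_re]

theorem qq_tendsto {η b : ℝ} (hη : 0 < η) : Tendsto (qq η b) atTop (𝓝 0) := by
  unfold qq
  refine Real.tendsto_exp_atBot.comp ?_
  have h1 : Tendsto (fun r : ℝ => 3 / 4 * η ^ 2 * r - b) atTop atTop :=
    tendsto_atTop_add_const_right _ _ (tendsto_id.const_mul_atTop (by positivity))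
  have h2 := tendsto_id.atTop_mul_atTop₀ h1
  refine (tendsto_neg_atTop_atBot.comp h2).congr fun r => ?_
  simp only [Function.comp, id]; ring

section
variable {dom : Set X} {A : X → X} {C : ℝ} {G : ℂ → X →L[ℂ] X}

theorem continuousOn_G_ray (hC : 1 ≤ C)
    (hG : ∀ l ∈ W C, IsResolventAt dom A l (G l) ∧ ‖G l‖ ≤ 2 * C / |l.im|)
    {σ a : ℝ} (hσ : |σ| = 1) (ha : 2 * C * |a| < 1) :
    ContinuousOn (fun r : ℝ => G ((r : ℂ) * wr σ a)) (Ioi 0) := by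
  have h1 : ContinuousOn G (W C) := fun l hl =>
    (hasDerivAt_resolvent hC hG hl).continuousAt.continuousWithinAt
  exact h1.comp (by fun_prop) (fun r hr => ray_mem_W hσ ha hr)

theorem norm_G_ray
    (hG : ∀ l ∈ W C, IsResolventAt dom A l (G l) ∧ ‖G l‖ ≤ 2 * C / |l.im|)
    {σ a r : ℝ} (hσ : |σ| = 1) (ha : 2 * C * |a| < 1) (hr : 0 < r) :
    ‖G ((r : ℂ) * wr σ a)‖ ≤ 2 * C / r := by
  have := (hG _ (ray_mem_W hσ ha hr)).2
  rwa [ray_im hσ hr] at this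

/-- The integrand `Φ`. -/
noncomputable def ph (G : ℂ → X →L[ℂ] X) (η t t' : ℝ) (x : X) (l : ℂ) : X := ee η t t' l • G l x

/-- Its derivative. -/
noncomputable def ph' (G : ℂ → X →L[ℂ] X) (η t t' : ℝ) (x : X) (l : ℂ) : X :=
  ee η t t' l • (-(G l * G l)) x + ee' η t t' l • G l x

theorem hasDerivAt_ph (hC : 1 ≤ C)
    (hG : ∀ l ∈ W C, IsResolventAt dom A l (G l) ∧ ‖G l‖ ≤ 2 * C / |l.im|)
    (η t t' : ℝ) (x : X) {l : ℂ} (hl : l ∈ W C) :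
    HasDerivAt (ph G η t t' x) (ph' G η t t' x l) l := by
  have h1 : HasDerivAt (fun l => G l x) ((-(G l * G l)) x) l := by
    have := (hasDerivAt_resolvent hC hG hl).clm_apply (hasDerivAt_const l x)
    simpa using this
  exact (hasDerivAt_ee η t t' l).smul h1

theorem norm_ph_le (hC : 1 ≤ C)
    (hG : ∀ l ∈ W C, IsResolventAt dom A l (G l) ∧ ‖G l‖ ≤ 2 * C / |l.im|)
    {η t t' σ a r : ℝ} (hσ : |σ| = 1) (ha : 2 * C * |a| < 1) (hr : 0 < r)
    (ht : 0 < t) (ht' : 0 < t') (x : X) :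
    ‖ph G η t t' x ((r : ℂ) * wr σ a)‖ ≤ 4 * C * (t + t') * ‖x‖ * qq η (t + t') r := by
  have ha' : |a| ≤ 1 / 2 := by nlinarith [abs_nonneg a]
  have hqq := qq_pos η (t + t') r
  rw [ph, norm_smul]
  calc _ ≤ (2 * r * (t + t') * qq η (t + t') r) * (2 * C / r * ‖x‖) := by
        gcongr
        · exact norm_ee_le hσ ha' hr ht ht'
        · exact ContinuousLinearMap.le_of_opNorm_le _ (norm_G_ray hG hσ ha hr) x
    _ = _ := by field_simp; ring

theorem norm_ph'_le (hC : 1 ≤ C)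
    (hG : ∀ l ∈ W C, IsResolventAt dom A l (G l) ∧ ‖G l‖ ≤ 2 * C / |l.im|)
    {η t t' σ a r : ℝ} (hσ : |σ| = 1) (ha : 2 * C * |a| < 1) (hr : 0 < r)
    (ht : 0 < t) (ht' : 0 < t') (x : X) :
    ‖((r : ℂ) * wr σ a) • ph' G η t t' x ((r : ℂ) * wr σ a)‖ ≤
      (16 * C ^ 2 + 4 * C * (1 + 8 * η ^ 2 * r ^ 2)) * (t + t') * ‖x‖ * qq η (t + t') r := by
  have ha' : |a| ≤ 1 / 2 := by nlinarith [abs_nonneg a]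
  have hg := norm_G_ray hG hσ ha hr
  have hqq := qq_pos η (t + t') r
  rw [ph', norm_smul]
  have h1 : ‖ee η t t' ((r : ℂ) * wr σ a) • (-(G ((r : ℂ) * wr σ a) * G ((r : ℂ) * wr σ a))) x‖ ≤
      (2 * r * (t + t') * qq η (t + t') r) * (2 * C / r * (2 * C / r) * ‖x‖) := by
    rw [norm_smul]
    gcongr
    · exact norm_ee_le hσ ha' hr ht ht'
    · refine ContinuousLinearMap.le_of_opNorm_le _ ?_ x
      rw [norm_neg]
      exact (norm_mul_le _ _).trans (by gcongr)
  have h2 : ‖ee' η t t' ((r : ℂ) * wr σ a) • G ((r : ℂ) * wr σ a) x‖ ≤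
      ((t + t') * (1 + 8 * η ^ 2 * r ^ 2) * qq η (t + t') r) * (2 * C / r * ‖x‖) := by
    rw [norm_smul]
    gcongr
    · exact norm_ee'_le hσ ha' hr ht ht'
    · exact ContinuousLinearMap.le_of_opNorm_le _ hg x
  calc _ ≤ (2 * r) * ((2 * r * (t + t') * qq η (t + t') r) * (2 * C / r * (2 * C / r) * ‖x‖) +
        ((t + t') * (1 + 8 * η ^ 2 * r ^ 2) * qq η (t + t') r) * (2 * C / r * ‖x‖)) := by
        gcongr
        · exact norm_ray_le hσ ha' hr
        · exact (norm_add_le _ _).trans (add_le_add h1 h2)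
    _ = _ := by field_simp; ring

/-- The ray integral. -/
noncomputable def JJ (G : ℂ → X →L[ℂ] X) (η t t' : ℝ) (x : X) (σ a : ℝ) : X :=
  ∫ r in Ioi (0:ℝ), wr σ a • ph G η t t' x ((r : ℂ) * wr σ a)

theorem hasDerivAt_JJ [CompleteSpace X] (hC : 1 ≤ C)
    (hG : ∀ l ∈ W C, IsResolventAt dom A l (G l) ∧ ‖G l‖ ≤ 2 * C / |l.im|)
    {η t t' σ a : ℝ} (hη : 0 < η) (hσ : |σ| = 1) (ha : 2 * C * |a| < 1)
    (ht : 0 < t) (ht' : 0 < t') (x : X) :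
    HasDerivAt (JJ G η t t' x σ) 0 a := by
  set b := t + t' with hb
  have hbpos : 0 < b := by positivity
  set D : ℝ → ℝ → X := fun a r => ph G η t t' x ((r : ℂ) * wr σ a) +
    ((r : ℂ) * wr σ a) • ph' G η t t' x ((r : ℂ) * wr σ a) with hD
  set K : ℝ := (16 * C ^ 2 + 8 * C + 32 * C * η ^ 2) * b * ‖x‖ with hK
  have hKnn : 0 ≤ K := by positivity
  have hDb : ∀ a r : ℝ, 2 * C * |a| < 1 → 0 < r → ‖D a r‖ ≤ K * (2 * qq η (b + 1) r) := by
    intro a r ha hr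
    have h1 := norm_ph_le (η := η) hC hG hσ ha hr ht ht' x
    have h2 := norm_ph'_le (η := η) hC hG hσ ha hr ht ht' x
    have hq := qq_pos η b r
    calc ‖D a r‖ ≤ 4 * C * b * ‖x‖ * qq η b r +
          (16 * C ^ 2 + 4 * C * (1 + 8 * η ^ 2 * r ^ 2)) * b * ‖x‖ * qq η b r :=
          (norm_add_le _ _).trans (add_le_add h1 h2)
      _ = (16 * C ^ 2 + 8 * C + 32 * C * η ^ 2 * r ^ 2) * (b * ‖x‖ * qq η b r) := by ring
      _ ≤ ((16 * C ^ 2 + 8 * C + 32 * C * η ^ 2) * (1 + r ^ 2)) * (b * ‖x‖ * qq η b r) := by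
          gcongr
          have : 0 ≤ (16 * C ^ 2 + 8 * C) * r ^ 2 + 32 * C * η ^ 2 := by positivity
          nlinarith
      _ = K * ((1 + r ^ 2) * qq η b r) := by rw [hK]; ring
      _ ≤ _ := by
          gcongr K * ?_
          exact qq_shift hr
  have hopen : {a : ℝ | 2 * C * |a| < 1} ∈ 𝓝 a :=
    (isOpen_lt (by fun_prop) continuous_const).mem_nhds ha
  have hcray : ∀ a : ℝ, Continuous fun r : ℝ => (r : ℂ) * wr σ a := fun a => by fun_prop
  have hphc : ∀ a : ℝ, 2 * C * |a| < 1 →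
      ContinuousOn (fun r : ℝ => ph G η t t' x ((r : ℂ) * wr σ a)) (Ioi 0) := by
    intro a ha
    have h1 : ContinuousOn (ph G η t t' x) (W C) := fun l hl =>
      (hasDerivAt_ph hC hG η t t' x hl).continuousAt.continuousWithinAt
    exact h1.comp (hcray a).continuousOn (fun r hr => ray_mem_W hσ ha hr)
  have hDc : ContinuousOn (D a) (Ioi 0) := by
    have hg := continuousOn_G_ray hC hG hσ ha
    refine (hphc a ha).add ((hcray a).continuousOn.smul ?_)
    unfold ph'
    refine ContinuousOn.add ?_ ?_
    · exact ((continuous_ee η t t').comp (hcray a)).continuousOn.smul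
        ((hg.mul hg).neg.clm_apply continuousOn_const)
    · exact ((continuous_ee' η t t').comp (hcray a)).continuousOn.smul
        (hg.clm_apply continuousOn_const)
  have hbint : Integrable (fun r => K * (2 * qq η (b + 1) r)) (volume.restrict (Ioi 0)) :=
    (((qq_integrable hη).const_mul 2).const_mul K).integrableOn
  have hDint : IntegrableOn (D a) (Ioi 0) := by
    refine hbint.mono' (hDc.aestronglyMeasurable measurableSet_Ioi) ?_
    exact (ae_restrict_mem measurableSet_Ioi).mono fun r hr => hDb a r ha hr
  have hrd : ∀ r ∈ Ioi (0:ℝ), HasDerivAt (fun r : ℝ => (r:ℂ) • ph G η t t' x ((r : ℂ) * wr σ a))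
      (D a r) r := by
    intro r hr
    have h1 : HasDerivAt (fun r : ℝ => (r:ℂ) * wr σ a) (wr σ a) r := by
      simpa using (Complex.ofRealCLM.hasDerivAt (x := r)).mul_const (wr σ a)
    have h2 := (hasDerivAt_ph hC hG η t t' x (ray_mem_W hσ ha hr)).scomp r h1
    have h3 : HasDerivAt (fun r : ℝ => (r:ℂ)) 1 r := by
      exact (Complex.ofRealCLM.hasDerivAt (x := r)).congr_deriv (by simp)
    have h4 := h3.smul h2
    refine h4.congr_deriv ?_
    simp only [hD, Function.comp]
    module
  have hI0 : ∫ r in Ioi (0:ℝ), D a r = 0 := by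
    have hbd : ∀ r : ℝ, 0 < r → ‖(r:ℂ) • ph G η t t' x ((r : ℂ) * wr σ a)‖ ≤
        4 * C * b * ‖x‖ * (r * qq η b r) := by
      intro r hr
      rw [norm_smul, Complex.norm_real, Real.norm_of_nonneg hr.le]
      have := norm_ph_le (η := η) hC hG hσ ha hr ht ht' x
      nlinarith
    have := integral_Ioi_of_hasDerivAt_of_tendsto (a := (0:ℝ)) (m := 0) ?_ hrd hDint ?_
    · rw [this]; simp
    · rw [ContinuousWithinAt]
      simp only [Complex.ofReal_zero, zero_smul]
      have hz : Tendsto (fun r => 4 * C * b * ‖x‖ * (r * qq η b r)) (𝓝[≥] 0) (𝓝 0) := by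
        have : Continuous (fun r => 4 * C * b * ‖x‖ * (r * qq η b r)) := by unfold qq; fun_prop
        have := (this.tendsto 0).mono_left (nhdsWithin_le_nhds (s := Ici 0))
        simpa using this
      refine squeeze_zero_norm' ?_ hz
      filter_upwards [self_mem_nhdsWithin] with r hr
      rcases (mem_Ici.mp hr).eq_or_lt with h | h
      · rw [← h]; simp
      · exact hbd r h
    · have hz : Tendsto (fun r => 4 * C * b * ‖x‖ * (2 * qq η (b + 1) r)) atTop (𝓝 0) := by
        have := ((qq_tendsto (b := b + 1) hη).const_mul 2).const_mul (4 * C * b * ‖x‖)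
        simpa using this
      refine squeeze_zero_norm' ?_ hz
      filter_upwards [eventually_gt_atTop 0] with r hr
      refine (hbd r hr).trans ?_
      gcongr 4 * C * b * ‖x‖ * ?_
      refine le_trans ?_ (qq_shift hr)
      have := qq_pos η b r
      gcongr
      nlinarith [sq_nonneg (r - 1)]
  have key := hasDerivAt_integral_of_dominated_loc_of_deriv_le (μ := volume.restrict (Ioi (0:ℝ)))
    (F := fun (a r : ℝ) => wr σ a • ph G η t t' x ((r : ℂ) * wr σ a))
    (F' := fun a r => -D a r) (x₀ := a) (bound := fun r => K * (2 * qq η (b + 1) r)) hopen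
    ?_ ?_ ?_ ?_ hbint ?_
  · have h := key.2
    rw [integral_neg, hI0, neg_zero] at h
    exact h
  · filter_upwards [hopen] with a' ha'
    exact ((hphc a' ha').const_smul _).aestronglyMeasurable measurableSet_Ioi
  · have ha' : |a| ≤ 1 / 2 := by nlinarith [abs_nonneg a]
    have hi : IntegrableOn (fun r => 2 * (4 * C * b * ‖x‖ * qq η b r)) (Ioi 0) :=
      (((qq_integrable hη).const_mul _).const_mul _).integrableOn
    refine hi.mono' (((hphc a ha).const_smul _).aestronglyMeasurable measurableSet_Ioi) ?_
    refine (ae_restrict_mem measurableSet_Ioi).mono fun r hr => ?_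
    rw [norm_smul]
    gcongr
    · exact norm_wr_le hσ ha'
    · exact norm_ph_le hC hG hσ ha hr ht ht' x
  · exact hDint.aestronglyMeasurable.neg
  · refine (ae_restrict_mem measurableSet_Ioi).mono fun r hr a' ha' => ?_
    rw [norm_neg]
    exact hDb a' r ha' hr
  · refine (ae_restrict_mem measurableSet_Ioi).mono fun r hr a' ha' => ?_
    have h0 : HasDerivAt (fun a : ℝ => wr σ a) (-1) a' := by
      unfold wr
      simpa using ((Complex.ofRealCLM.hasDerivAt (x := a')).neg).add_const ((σ:ℂ) * Complex.I)
    have h1 : HasDerivAt (fun a : ℝ => (r:ℂ) * wr σ a) (-(r:ℂ)) a' := by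
      simpa using h0.const_mul (r:ℂ)
    have h2 := (hasDerivAt_ph hC hG η t t' x (ray_mem_W hσ ha' hr)).scomp a' h1
    have h4 := h0.smul h2
    refine h4.congr_deriv ?_
    simp only [hD, Function.comp]
    module

theorem JJ_const [CompleteSpace X] (hC : 1 ≤ C)
    (hG : ∀ l ∈ W C, IsResolventAt dom A l (G l) ∧ ‖G l‖ ≤ 2 * C / |l.im|)
    {η t t' σ a : ℝ} (hη : 0 < η) (hσ : |σ| = 1) (ha : 2 * C * |a| < 1)
    (ht : 0 < t) (ht' : 0 < t') (x : X) :
    JJ G η t t' x σ a = JJ G η t t' x σ 0 := by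
  have hCpos : 0 < C := by linarith
  have hset : ∀ a : ℝ, a ∈ Ioo (-(1 / (2 * C))) (1 / (2 * C)) ↔ 2 * C * |a| < 1 := by
    intro a
    rw [mem_Ioo, ← abs_lt, lt_div_iff₀ (by positivity), mul_comm]
  have := (convex_Ioo (-(1 / (2 * C))) (1 / (2 * C))).norm_image_sub_le_of_norm_hasDerivWithin_le
    (f := JJ G η t t' x σ) (f' := fun _ => 0) (C := 0) (x := 0) (y := a)
    (fun y hy => (hasDerivAt_JJ hC hG hη hσ ((hset y).mp hy) ht ht' x).hasDerivWithinAt)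
    (fun y _ => by simp) ((hset 0).mpr (by simp)) ((hset a).mpr ha)
  rw [zero_mul, norm_le_zero_iff, sub_eq_zero] at this
  exact this

end

end Contour

section Key

open MeasureTheory Set

variable {X : Type u} [NormedAddCommGroup X] [NormedSpace ℂ X]
variable {dom : Set X} {A : X → X} {C : ℝ} {G : ℂ → X →L[ℂ] X}

theorem integral_split {h : ℝ → X} (h1 : IntegrableOn (fun r => h (1 * r)) (Ioi 0))
    (h2 : IntegrableOn (fun r => h (-1 * r)) (Ioi 0)) :
    ∫ s, h s = (∫ r in Ioi (0:ℝ), h (1 * r)) + ∫ r in Ioi (0:ℝ), h (-1 * r) := by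
  simp only [one_mul, neg_mul] at *
  have hpre : (fun x : ℝ => -x) ⁻¹' (Iio 0) = Ioi 0 := by ext; simp
  have h3 : IntegrableOn h (Iio 0) := by
    have := (Measure.measurePreserving_neg (volume : Measure ℝ)).integrableOn_comp_preimage
      (MeasurableEquiv.neg ℝ).measurableEmbedding (f := h) (s := Iio 0)
    rw [← this]
    change IntegrableOn (fun r => h (-r)) ((fun x : ℝ => -x) ⁻¹' (Iio 0))
    rwa [hpre]
  have h4 : ∫ r in Ioi (0:ℝ), h (-r) = ∫ r in Iic (0:ℝ), h r := by
    rw [integral_comp_neg_Ioi, neg_zero]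
  rw [h4, add_comm, intervalIntegral.integral_Iic_add_Ioi _ h1]
  exact (integrableOn_Iic_iff_integrableOn_Iio).mpr h3

/-- the direction of the final contour -/
noncomputable def ww (C σ : ℝ) : ℂ := wr σ (1 / (4 * C))

theorem a0_lt (hC : 1 ≤ C) : 2 * C * |1 / (4 * C)| < 1 := by
  have : 0 < C := by linarith
  rw [abs_of_pos (by positivity)]
  field_simp
  norm_num

theorem a0_le (hC : 1 ≤ C) : |1 / (4 * C)| ≤ 1 / 2 := by
  have := a0_lt hC
  nlinarith [abs_nonneg (1 / (4 * C))]

theorem norm_ww_le (hC : 1 ≤ C) {σ : ℝ} (hσ : |σ| = 1) : ‖ww C σ‖ ≤ 2 := norm_wr_le hσ (a0_le hC)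

/-- the operator ray integral -/
noncomputable def KK (G : ℂ → X →L[ℂ] X) (C σ : ℝ) (z z' : ℂ) : X →L[ℂ] X :=
  ∫ r in Ioi (0:ℝ), (Complex.exp (r * ww C σ * z) - Complex.exp (r * ww C σ * z')) •
    G (r * ww C σ)

theorem KK_pointwise (hC : 1 ≤ C)
    (hG : ∀ l ∈ W C, IsResolventAt dom A l (G l) ∧ ‖G l‖ ≤ 2 * C / |l.im|)
    {σ k r : ℝ} (hσ : |σ| = 1) {z z' : ℂ} (hz : (ww C σ * z).re ≤ -k)
    (hz' : (ww C σ * z').re ≤ -k) (hr : 0 < r) :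
    ‖(Complex.exp (r * ww C σ * z) - Complex.exp (r * ww C σ * z')) • G (r * ww C σ)‖ ≤
      Real.exp (-k * r) * (4 * C * ‖z - z'‖) := by
  have h1 : ∀ z : ℂ, (ww C σ * z).re ≤ -k → (r * ww C σ * z).re ≤ -k * r := by
    intro z hz
    rw [mul_assoc, Complex.re_ofReal_mul]
    nlinarith
  have h2 := norm_exp_sub_exp_le (h1 z hz) (h1 z' hz')
  have h3 : ‖r * ww C σ * z - r * ww C σ * z'‖ ≤ 2 * r * ‖z - z'‖ := by
    rw [← mul_sub, norm_mul]
    gcongr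
    exact norm_ray_le hσ (a0_le hC) hr
  rw [norm_smul]
  calc _ ≤ (Real.exp (-k * r) * (2 * r * ‖z - z'‖)) * (2 * C / r) := by
        gcongr
        · exact h2.trans (by gcongr)
        · exact norm_G_ray hG hσ (a0_lt hC) hr
    _ = _ := by field_simp; ring

theorem KK_meas (hC : 1 ≤ C)
    (hG : ∀ l ∈ W C, IsResolventAt dom A l (G l) ∧ ‖G l‖ ≤ 2 * C / |l.im|)
    {σ : ℝ} (hσ : |σ| = 1) (z z' : ℂ) :
    AEStronglyMeasurable (fun r : ℝ => (Complex.exp (r * ww C σ * z) -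
      Complex.exp (r * ww C σ * z')) • G (r * ww C σ)) (volume.restrict (Ioi 0)) := by
  refine ContinuousOn.aestronglyMeasurable ?_ measurableSet_Ioi
  have hc : Continuous (fun r : ℝ => Complex.exp (r * ww C σ * z) -
      Complex.exp (r * ww C σ * z')) := by fun_prop
  exact hc.continuousOn.smul (continuousOn_G_ray hC hG hσ (a0_lt hC))

theorem KK_integrable (hC : 1 ≤ C)
    (hG : ∀ l ∈ W C, IsResolventAt dom A l (G l) ∧ ‖G l‖ ≤ 2 * C / |l.im|)
    {σ k : ℝ} (hk : 0 < k) (hσ : |σ| = 1) {z z' : ℂ} (hz : (ww C σ * z).re ≤ -k)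
    (hz' : (ww C σ * z').re ≤ -k) :
    IntegrableOn (fun r : ℝ => (Complex.exp (r * ww C σ * z) -
      Complex.exp (r * ww C σ * z')) • G (r * ww C σ)) (Ioi 0) := by
  refine ((exp_neg_integrableOn_Ioi 0 hk).mul_const (4 * C * ‖z - z'‖)).mono'
    (KK_meas hC hG hσ z z') ?_
  exact (ae_restrict_mem measurableSet_Ioi).mono fun r hr => KK_pointwise hC hG hσ hz hz' hr

theorem KK_norm_le (hC : 1 ≤ C)
    (hG : ∀ l ∈ W C, IsResolventAt dom A l (G l) ∧ ‖G l‖ ≤ 2 * C / |l.im|)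
    {σ k : ℝ} (hk : 0 < k) (hσ : |σ| = 1) {z z' : ℂ} (hz : (ww C σ * z).re ≤ -k)
    (hz' : (ww C σ * z').re ≤ -k) :
    ‖KK G C σ z z'‖ ≤ k⁻¹ * (4 * C * ‖z - z'‖) := by
  rw [← integral_exp_neg hk, ← integral_mul_const]
  refine norm_integral_le_of_norm_le
    ((exp_neg_integrableOn_Ioi 0 hk).mul_const (4 * C * ‖z - z'‖)) ?_
  exact (ae_restrict_mem measurableSet_Ioi).mono fun r hr => KK_pointwise hC hG hσ hz hz' hr

theorem ww_mul_real_re (σ t : ℝ) : (ww C σ * t).re = -(t / (4 * C)) := by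
  rw [Complex.re_mul_ofReal, ww, wr_re]; ring

theorem JJ_tendsto (hC : 1 ≤ C)
    (hG : ∀ l ∈ W C, IsResolventAt dom A l (G l) ∧ ‖G l‖ ≤ 2 * C / |l.im|)
    {σ t t' : ℝ} (hσ : |σ| = 1) (ht : 0 < t) (ht' : 0 < t') (x : X) :
    Tendsto (fun η : ℝ => JJ G η t t' x σ (1 / (4 * C))) (𝓝[>] 0)
      (𝓝 (ww C σ • KK G C σ t t' x)) := by
  have hCpos : 0 < C := by linarith
  set k := (min t t') / (4 * C) with hk
  have hkpos : 0 < k := div_pos (lt_min ht ht') (by positivity)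
  have hz : (ww C σ * t).re ≤ -k := by
    rw [ww_mul_real_re, hk]
    gcongr
    exact min_le_left _ _
  have hz' : (ww C σ * t').re ≤ -k := by
    rw [ww_mul_real_re, hk]
    gcongr
    exact min_le_right _ _
  have hintg := KK_integrable hC hG hkpos hσ hz hz'
  have e1 : ww C σ • KK G C σ t t' x = ∫ r in Ioi (0:ℝ), ww C σ •
      ((Complex.exp (r * ww C σ * t) - Complex.exp (r * ww C σ * t')) • G (r * ww C σ)) x := by
    rw [KK, ContinuousLinearMap.integral_apply hintg, integral_smul]
  rw [e1]
  have hph : ∀ η r : ℝ, ph G η t t' x ((r : ℂ) * wr σ (1 / (4 * C))) =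
      Complex.exp ((η : ℂ) ^ 2 * ((r : ℂ) * ww C σ) ^ 2) •
      ((Complex.exp (r * ww C σ * t) - Complex.exp (r * ww C σ * t')) • G (r * ww C σ)) x := by
    intro η r
    rw [ph, ee, smul_apply, smul_smul, mul_comm]; rfl
  unfold JJ
  simp_rw [hph]
  refine tendsto_integral_filter_of_dominated_convergence
    (fun r => ‖ww C σ‖ * (‖(Complex.exp (r * ww C σ * t) - Complex.exp (r * ww C σ * t')) •
      G (r * ww C σ)‖ * ‖x‖)) ?_ ?_ ?_ ?_
  · filter_upwards with η
    refine AEStronglyMeasurable.const_smul ?_ _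
    have hc : Continuous fun r : ℝ => Complex.exp ((η : ℂ) ^ 2 * ((r : ℂ) * ww C σ) ^ 2) := by
      fun_prop
    refine hc.aestronglyMeasurable.smul ?_
    exact (ContinuousLinearMap.apply ℂ X x).continuous.comp_aestronglyMeasurable
      hintg.aestronglyMeasurable
  · filter_upwards with η
    filter_upwards with r
    rw [norm_smul, norm_smul]
    have h1 : ‖Complex.exp ((η : ℂ) ^ 2 * ((r : ℂ) * ww C σ) ^ 2)‖ ≤ 1 := by
      refine (norm_gaussfactor_le hσ (a0_le hC)).trans ?_
      rw [Real.exp_le_one_iff, neg_nonpos]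
      positivity
    have h2 : ‖wr σ (1 / (4 * C))‖ = ‖ww C σ‖ := rfl
    rw [h2]
    refine mul_le_mul_of_nonneg_left ?_ (norm_nonneg _)
    refine le_trans (mul_le_of_le_one_left (norm_nonneg _) h1) ?_
    exact ((Complex.exp (r * ww C σ * t) - Complex.exp (r * ww C σ * t')) •
      G (r * ww C σ)).le_opNorm x
  · exact (hintg.norm.mul_const _).const_mul _
  · filter_upwards with r
    have hc : Continuous fun η : ℝ => wr σ (1 / (4 * C)) •
        (Complex.exp ((η : ℂ) ^ 2 * ((r : ℂ) * ww C σ) ^ 2) •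
      ((Complex.exp (r * ww C σ * t) - Complex.exp (r * ww C σ * t')) • G (r * ww C σ)) x) := by
      fun_prop
    have := (hc.tendsto 0).mono_left (nhdsWithin_le_nhds (s := Ioi 0))
    simp only [Complex.ofReal_zero, ne_eq, OfNat.ofNat_ne_zero, not_false_eq_true, zero_pow,
      zero_mul, Complex.exp_zero, one_smul] at this
    exact this

theorem ee_axis (η t t' s : ℝ) : ee η t t' (s * Complex.I) = osc η t s - osc η t' s := by
  rw [ee, osc, osc, ← sub_mul]
  have h : (η : ℂ) ^ 2 * ((s : ℂ) * Complex.I) ^ 2 = -((η ^ 2 : ℝ) : ℂ) * s ^ 2 := by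
    rw [mul_pow, Complex.I_sq]; push_cast; ring
  have e : ∀ t : ℝ, (s : ℂ) * Complex.I * t = Complex.I * t * s := by intro t; ring
  rw [h, e, e]

theorem key_identity [CompleteSpace X] {T : ℝ → X →L[ℂ] X} {M : ℝ} (hT : IsC0Semigroup T)
    (hM1 : 1 ≤ M) (hM : ∀ t : ℝ, 0 ≤ t → ‖T t‖ ≤ M) (hA : IsGenerator T dom A) (hC : 1 ≤ C)
    (hG : ∀ l ∈ W C, IsResolventAt dom A l (G l) ∧ ‖G l‖ ≤ 2 * C / |l.im|)
    {t t' : ℝ} (ht : 0 < t) (ht' : 0 < t') (x : X) :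
    (2 * Real.pi) • T t x - (2 * Real.pi) • T t' x =
      (-Complex.I) • (ww C 1 • KK G C 1 t t' x - ww C (-1) • KK G C (-1) t t' x) := by
  have h1 : |(1:ℝ)| = 1 := by simp
  have hm1 : |(-1:ℝ)| = 1 := by simp
  have hB : ∀ τ, 0 < τ → ‖T τ x‖ ≤ M * ‖x‖ := fun τ hτ => (T τ).le_of_opNorm_le (hM τ hτ.le) _
  have hf : ContinuousOn (fun t => T t x) (Ioi 0) :=
    (sg_continuousOn hT hM x).mono Ioi_subset_Ici_self
  have hmem : ∀ s : ℝ, s ≠ 0 → (s : ℂ) * Complex.I ∈ W C := by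
    intro s hs
    change 2 * C * |((s : ℂ) * Complex.I).re| < |((s : ℂ) * Complex.I).im|
    simpa using hs
  have hGn : ∀ s : ℝ, s ≠ 0 → ‖G (s * Complex.I)‖ ≤ 2 * C / |s| := by
    intro s hs
    simpa using (hG _ (hmem s hs)).2
  have hr : ∀ s : ℝ, s ≠ 0 → Tendsto (fun e : ℝ => Lap (fun t => T t x) (e + s * Complex.I))
      (𝓝[>] 0) (𝓝 (G (s * Complex.I) x)) := by
    intro s hs
    rw [tendsto_iff_norm_sub_tendsto_zero]
    set Q := ‖G (s * Complex.I)‖ * (‖G (s * Complex.I)‖ * (2 * M * ‖x‖))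
    have hz : Tendsto (fun e : ℝ => e * Q) (𝓝[>] 0) (𝓝 0) := by
      have : Continuous fun e : ℝ => e * Q := by fun_prop
      have := (this.tendsto 0).mono_left (nhdsWithin_le_nhds (s := Ioi 0))
      simpa using this
    refine squeeze_zero' (Eventually.of_forall fun _ => norm_nonneg _) ?_ hz
    filter_upwards [self_mem_nhdsWithin] with e he
    exact (lap_bound hT hM1 hM hA (hG _ (hmem s hs)).1 x he).2
  have hD : ∀ e s : ℝ, 0 < e → s ≠ 0 → ‖Lap (fun t => T t x) (e + s * Complex.I)‖ ≤
      (2 * C * (2 * M * ‖x‖)) / |s| := by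
    intro e s he hs
    refine (lap_bound hT hM1 hM hA (hG _ (hmem s hs)).1 x he).1.trans ?_
    rw [mul_div_right_comm]
    gcongr
    exact hGn s hs
  have hL := (gk_tendsto hf hB ht).sub (gk_tendsto hf hB ht')
  have hR := ((JJ_tendsto hC hG h1 ht ht' x).sub (JJ_tendsto hC hG hm1 ht ht' x)).const_smul
    (-Complex.I)
  refine tendsto_nhds_unique hL (hR.congr' ?_)
  filter_upwards [self_mem_nhdsWithin] with η hη
  have hη : 0 < η := hη
  rw [JJ_const hC hG hη h1 (a0_lt hC) ht ht' x, JJ_const hC hG hη hm1 (a0_lt hC) ht ht' x]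
  rw [← gauss_limit hf hB hr hD hη t t']
  have h0 : 2 * C * |(0:ℝ)| < 1 := by simp
  have hpt : ∀ σ r : ℝ, (osc η t (σ * r) - osc η t' (σ * r)) • G ((σ * r : ℝ) * Complex.I) x =
      ph G η t t' x ((r : ℂ) * wr σ 0) := by
    intro σ r
    have : (r : ℂ) * wr σ 0 = ((σ * r : ℝ) : ℂ) * Complex.I := by
      rw [wr]; push_cast; ring
    rw [this, ph, ee_axis]
  have hintg : ∀ σ : ℝ, |σ| = 1 → IntegrableOn (fun r : ℝ =>
      ph G η t t' x ((r : ℂ) * wr σ 0)) (Ioi 0) := by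
    intro σ hσ
    have hi : IntegrableOn (fun r => (4 * C * (t + t') * ‖x‖ * qq η (t + t') r)) (Ioi 0) :=
      ((qq_integrable hη).const_mul _).integrableOn
    refine hi.mono' ?_ ?_
    · refine ContinuousOn.aestronglyMeasurable ?_ measurableSet_Ioi
      have h1 : ContinuousOn (ph G η t t' x) (W C) := fun l hl =>
        (hasDerivAt_ph hC hG η t t' x hl).continuousAt.continuousWithinAt
      exact h1.comp (by fun_prop) (fun r hr => ray_mem_W hσ h0 hr)
    · exact (ae_restrict_mem measurableSet_Ioi).mono fun r hr =>
        norm_ph_le hC hG hσ h0 hr ht ht' x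
  have hsplit := integral_split
    (h := fun s : ℝ => (osc η t s - osc η t' s) • G (s * Complex.I) x)
    (by simp only [hpt]; exact hintg 1 h1) (by simp only [hpt]; exact hintg (-1) hm1)
  simp only [hpt] at hsplit
  rw [hsplit, JJ, JJ, integral_smul, integral_smul]
  have e1 : wr 1 0 = Complex.I := by simp [wr]
  have e2 : wr (-1) 0 = -Complex.I := by simp [wr]
  generalize (∫ r in Ioi (0:ℝ), ph G η t t' x ((r : ℂ) * wr 1 0)) = P
  generalize (∫ r in Ioi (0:ℝ), ph G η t t' x ((r : ℂ) * wr (-1) 0)) = Q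
  rw [e1, e2, smul_sub, smul_smul, smul_smul]
  simp

end Key

section Final

open MeasureTheory Set

variable {X : Type u} [NormedAddCommGroup X] [NormedSpace ℂ X]
variable {dom : Set X} {A : X → X} {C : ℝ} {G : ℂ → X →L[ℂ] X}

theorem ww_mul_re (C σ : ℝ) (z : ℂ) : (ww C σ * z).re = -(z.re / (4 * C)) - σ * z.im := by
  rw [Complex.mul_re, ww, wr_re, wr_im]; ring

/-- the open sector -/
def Om (C : ℝ) : Set ℂ := {z | (ww C 1 * z).re < 0 ∧ (ww C (-1) * z).re < 0}

theorem isOpen_Om : IsOpen (Om C) := by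
  have h : ∀ σ : ℝ, IsOpen {z : ℂ | (ww C σ * z).re < 0} := fun σ =>
    isOpen_lt (by fun_prop) continuous_const
  exact (h 1).inter (h (-1))

theorem convex_Om : Convex ℝ (Om C) := by
  intro x hx y hy a b ha hb hab
  have key : ∀ σ : ℝ, (ww C σ * x).re < 0 → (ww C σ * y).re < 0 →
      (ww C σ * (a • x + b • y)).re < 0 := by
    intro σ h1 h2
    have : (ww C σ * (a • x + b • y)).re = a * (ww C σ * x).re + b * (ww C σ * y).re := by
      simp only [Complex.mul_re, Complex.add_re, Complex.add_im, Complex.smul_re, Complex.smul_im,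
        smul_eq_mul]
      ring
    rw [this]
    rcases ha.eq_or_lt with h | h
    · have : b = 1 := by linarith
      rw [← h, this]; linarith
    · nlinarith [mul_pos h (neg_pos.mpr h1), mul_nonneg hb (neg_pos.mpr h2).le]
  exact ⟨key 1 hx.1 hy.1, key (-1) hx.2 hy.2⟩

theorem Om_add {z w : ℂ} (hz : z ∈ Om C) (hw : w ∈ Om C) : z + w ∈ Om C := by
  constructor
  · rw [mul_add, Complex.add_re]; linarith [hz.1, hw.1]
  · rw [mul_add, Complex.add_re]; linarith [hz.2, hw.2]

theorem real_mem_Om (hC : 1 ≤ C) {t : ℝ} (ht : 0 < t) : (t : ℂ) ∈ Om C := by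
  have : 0 < t / (4 * C) := by positivity
  constructor <;> rw [ww_mul_real_re] <;> linarith

theorem Om_ne_zero {z : ℂ} (hz : z ∈ Om C) : z ≠ 0 := by
  rintro rfl
  have := hz.1
  simp at this

theorem KK_add (hC : 1 ≤ C)
    (hG : ∀ l ∈ W C, IsResolventAt dom A l (G l) ∧ ‖G l‖ ≤ 2 * C / |l.im|)
    {σ : ℝ} (hσ : |σ| = 1) {a b c : ℂ} (ha : (ww C σ * a).re < 0)
    (hb : (ww C σ * b).re < 0) (hc : (ww C σ * c).re < 0) :
    KK G C σ a c = KK G C σ a b + KK G C σ b c := by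
  have hi : ∀ a b : ℂ, (ww C σ * a).re < 0 → (ww C σ * b).re < 0 →
      IntegrableOn (fun r : ℝ => (Complex.exp (r * ww C σ * a) -
      Complex.exp (r * ww C σ * b)) • G (r * ww C σ)) (Ioi 0) := by
    intro a b ha hb
    have h1 := min_le_left (-(ww C σ * a).re) (-(ww C σ * b).re)
    have h2 := min_le_right (-(ww C σ * a).re) (-(ww C σ * b).re)
    have hk : 0 < min (-(ww C σ * a).re) (-(ww C σ * b).re) :=
      lt_min (by linarith) (by linarith)
    exact KK_integrable hC hG hk hσ (by linarith) (by linarith)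
  rw [KK, KK, KK, ← integral_add (hi a b ha hb) (hi b c hb hc)]
  congr 1
  ext1 r
  rw [← add_smul, sub_add_sub_cancel]

theorem KK_differentiableAt (hC : 1 ≤ C)
    (hG : ∀ l ∈ W C, IsResolventAt dom A l (G l) ∧ ‖G l‖ ≤ 2 * C / |l.im|)
    {σ : ℝ} (hσ : |σ| = 1) {a b : ℂ} (ha : (ww C σ * a).re < 0)
    (hb : (ww C σ * b).re < 0) : DifferentiableAt ℂ (fun z => KK G C σ z b) a := by
  set k := min (-(ww C σ * a).re / 2) (-(ww C σ * b).re) with hk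
  have h1 : k ≤ -(ww C σ * a).re / 2 := min_le_left _ _
  have h2 : k ≤ -(ww C σ * b).re := min_le_right _ _
  have hkpos : 0 < k := lt_min (by linarith) (by linarith)
  have hs : {z : ℂ | (ww C σ * z).re < -k} ∈ 𝓝 a := by
    refine (isOpen_lt (by fun_prop) continuous_const).mem_nhds ?_
    change (ww C σ * a).re < -k
    linarith
  refine (hasDerivAt_integral_of_dominated_loc_of_deriv_le
    (F := fun (z : ℂ) (r : ℝ) => (Complex.exp (r * ww C σ * z) - Complex.exp (r * ww C σ * b)) •
      G (r * ww C σ))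
    (F' := fun (z : ℂ) (r : ℝ) => (Complex.exp (r * ww C σ * z) * (r * ww C σ)) • G (r * ww C σ))
    (bound := fun r => Real.exp (-k * r) * (4 * C)) hs
    (Eventually.of_forall fun z => KK_meas hC hG hσ z b)
    (KK_integrable hC hG hkpos hσ (by linarith) (by linarith)) ?_ ?_
    ((exp_neg_integrableOn_Ioi 0 hkpos).mul_const (4 * C)) ?_).2.differentiableAt
  · refine ContinuousOn.aestronglyMeasurable ?_ measurableSet_Ioi
    have hc : Continuous (fun r : ℝ => Complex.exp (r * ww C σ * a) * (r * ww C σ)) := by fun_prop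
    exact hc.continuousOn.smul (continuousOn_G_ray hC hG hσ (a0_lt hC))
  · refine (ae_restrict_mem measurableSet_Ioi).mono fun r hr z hz => ?_
    have hr : 0 < r := hr
    have hz : (ww C σ * z).re < -k := hz
    rw [norm_smul, norm_mul, Complex.norm_exp]
    have e : (r * ww C σ * z).re ≤ -k * r := by
      rw [mul_assoc, Complex.re_ofReal_mul]; nlinarith
    calc _ ≤ (Real.exp (-k * r) * (2 * r)) * (2 * C / r) := by
          gcongr
          · exact norm_ray_le hσ (a0_le hC) hr
          · exact norm_G_ray hG hσ (a0_lt hC) hr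
      _ = _ := by field_simp; ring
  · refine Eventually.of_forall fun r z _ => ?_
    have h : HasDerivAt (fun z : ℂ => (r : ℂ) * ww C σ * z) ((r : ℂ) * ww C σ) z := by
      simpa using (hasDerivAt_id z).const_mul ((r : ℂ) * ww C σ)
    exact (h.cexp.sub_const (Complex.exp (r * ww C σ * b))).smul_const (G (r * ww C σ))

/-- the contour integral difference -/
noncomputable def VV (G : ℂ → X →L[ℂ] X) (C : ℝ) (z z' : ℂ) : X →L[ℂ] X :=
  ((2 * Real.pi)⁻¹ : ℝ) • ((-Complex.I) • (ww C 1 • KK G C 1 z z' -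
    ww C (-1) • KK G C (-1) z z'))

theorem abs_one' : |(1:ℝ)| = 1 := by simp
theorem abs_neg_one' : |(-1:ℝ)| = 1 := by simp

theorem VV_add (hC : 1 ≤ C)
    (hG : ∀ l ∈ W C, IsResolventAt dom A l (G l) ∧ ‖G l‖ ≤ 2 * C / |l.im|)
    {a b c : ℂ} (ha : a ∈ Om C) (hb : b ∈ Om C) (hc : c ∈ Om C) :
    VV G C a c = VV G C a b + VV G C b c := by
  rw [VV, VV, VV, KK_add hC hG abs_one' ha.1 hb.1 hc.1, KK_add hC hG abs_neg_one' ha.2 hb.2 hc.2,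
    ← smul_add, ← smul_add]
  congr 2
  rw [smul_add, smul_add]
  abel

theorem VV_real [CompleteSpace X] {T : ℝ → X →L[ℂ] X} {M : ℝ} (hT : IsC0Semigroup T)
    (hM1 : 1 ≤ M) (hM : ∀ t : ℝ, 0 ≤ t → ‖T t‖ ≤ M) (hA : IsGenerator T dom A) (hC : 1 ≤ C)
    (hG : ∀ l ∈ W C, IsResolventAt dom A l (G l) ∧ ‖G l‖ ≤ 2 * C / |l.im|)
    {t t' : ℝ} (ht : 0 < t) (ht' : 0 < t') : VV G C t t' = T t - T t' := by
  ext x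
  have h := key_identity hT hM1 hM hA hC hG ht ht' x
  have h2 : VV G C t t' x = ((2 * Real.pi)⁻¹ : ℝ) • ((-Complex.I) •
      (ww C 1 • KK G C 1 t t' x - ww C (-1) • KK G C (-1) t t' x)) := rfl
  rw [h2, ← h, ← smul_sub, smul_smul, inv_mul_cancel₀ (by positivity), one_smul]
  rfl

theorem VV_norm_le (hC : 1 ≤ C)
    (hG : ∀ l ∈ W C, IsResolventAt dom A l (G l) ∧ ‖G l‖ ≤ 2 * C / |l.im|)
    {z : ℂ} (hre : 0 < z.re) (him : |z.im| ≤ z.re / (8 * C)) :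
    ‖VV G C z (z.re : ℂ)‖ ≤ 3 * C := by
  have hCpos : 0 < C := by linarith
  have hk : 0 < z.re / (8 * C) := by positivity
  have e4 : z.re / (4 * C) = 2 * (z.re / (8 * C)) := by field_simp; ring
  have hd : ‖z - (z.re : ℂ)‖ = |z.im| := by
    have : z - (z.re : ℂ) = z.im * Complex.I := by
      apply Complex.ext <;> simp
    rw [this]; simp
  have key : ∀ σ : ℝ, |σ| = 1 → ‖ww C σ • KK G C σ z (z.re : ℂ)‖ ≤ 8 * C := by
    intro σ hσ
    have h1 : (ww C σ * z).re ≤ -(z.re / (8 * C)) := by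
      rw [ww_mul_re, e4]
      have : |σ * z.im| ≤ z.re / (8 * C) := by rw [abs_mul, hσ, one_mul]; exact him
      linarith [neg_abs_le (σ * z.im)]
    have h2 : (ww C σ * (z.re : ℂ)).re ≤ -(z.re / (8 * C)) := by
      rw [ww_mul_real_re, e4]; linarith
    have h3 := KK_norm_le hC hG hk hσ h1 h2
    rw [hd] at h3
    have h4 : (z.re / (8 * C))⁻¹ * (4 * C * |z.im|) ≤ 4 * C := by
      rw [inv_mul_le_iff₀ hk]
      nlinarith
    rw [norm_smul]
    have := norm_ww_le hC hσ
    nlinarith [norm_nonneg (KK G C σ z (z.re : ℂ)), norm_nonneg (ww C σ)]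
  rw [VV, norm_smul, norm_smul, norm_neg, Complex.norm_I, one_mul, norm_inv, Real.norm_eq_abs,
    abs_of_pos (by positivity), inv_mul_le_iff₀ (by positivity)]
  refine (norm_sub_le _ _).trans ?_
  have := key 1 abs_one'
  have := key (-1) abs_neg_one'
  nlinarith [Real.pi_gt_three]

/-- the extension -/
noncomputable def SS (G : ℂ → X →L[ℂ] X) (C : ℝ) (T : ℝ → X →L[ℂ] X) (z : ℂ) : X →L[ℂ] X :=
  T 1 + VV G C z ((1:ℝ) : ℂ)

theorem SS_diff (hC : 1 ≤ C)
    (hG : ∀ l ∈ W C, IsResolventAt dom A l (G l) ∧ ‖G l‖ ≤ 2 * C / |l.im|)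
    (T : ℝ → X →L[ℂ] X) : DifferentiableOn ℂ (SS G C T) (Om C) := by
  intro z hz
  have h1 := real_mem_Om hC one_pos
  have d1 := KK_differentiableAt hC hG abs_one' hz.1 h1.1
  have d2 := KK_differentiableAt hC hG abs_neg_one' hz.2 h1.2
  exact (((((d1.const_smul (ww C 1)).sub (d2.const_smul (ww C (-1)))).const_smul
    (-Complex.I)).const_smul ((2 * Real.pi)⁻¹ : ℝ)).const_add (T 1)).differentiableWithinAt

section Sg

variable [CompleteSpace X] {T : ℝ → X →L[ℂ] X} {M : ℝ}

theorem SS_eq (hT : IsC0Semigroup T)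
    (hM1 : 1 ≤ M) (hM : ∀ t : ℝ, 0 ≤ t → ‖T t‖ ≤ M) (hA : IsGenerator T dom A) (hC : 1 ≤ C)
    (hG : ∀ l ∈ W C, IsResolventAt dom A l (G l) ∧ ‖G l‖ ≤ 2 * C / |l.im|)
    {z : ℂ} (hz : z ∈ Om C) {s : ℝ} (hs : 0 < s) : SS G C T z = T s + VV G C z s := by
  rw [SS, VV_add hC hG hz (real_mem_Om hC hs) (real_mem_Om hC one_pos),
    VV_real hT hM1 hM hA hC hG hs one_pos]
  abel

theorem SS_real (hT : IsC0Semigroup T)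
    (hM1 : 1 ≤ M) (hM : ∀ t : ℝ, 0 ≤ t → ‖T t‖ ≤ M) (hA : IsGenerator T dom A) (hC : 1 ≤ C)
    (hG : ∀ l ∈ W C, IsResolventAt dom A l (G l) ∧ ‖G l‖ ≤ 2 * C / |l.im|)
    {s : ℝ} (hs : 0 < s) : SS G C T s = T s := by
  rw [SS, VV_real hT hM1 hM hA hC hG hs one_pos]
  abel

theorem SS_norm_le (hT : IsC0Semigroup T)
    (hM1 : 1 ≤ M) (hM : ∀ t : ℝ, 0 ≤ t → ‖T t‖ ≤ M) (hA : IsGenerator T dom A) (hC : 1 ≤ C)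
    (hG : ∀ l ∈ W C, IsResolventAt dom A l (G l) ∧ ‖G l‖ ≤ 2 * C / |l.im|)
    {z : ℂ} (hz : z ∈ Om C) (hre : 0 < z.re) (him : |z.im| ≤ z.re / (8 * C)) :
    ‖SS G C T z‖ ≤ M + 3 * C := by
  rw [SS_eq hT hM1 hM hA hC hG hz hre]
  exact (norm_add_le _ _).trans (add_le_add (hM _ hre.le) (VV_norm_le hC hG hre him))

theorem ident_real {E : Type*} [NormedAddCommGroup E] [NormedSpace ℂ E] [CompleteSpace E]
    (hC : 1 ≤ C) {f g : ℂ → E} (hf : DifferentiableOn ℂ f (Om C))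
    (hg : DifferentiableOn ℂ g (Om C)) (h : ∀ t : ℝ, 0 < t → f t = g t) :
    EqOn f g (Om C) := by
  refine (hf.analyticOnNhd isOpen_Om).eqOn_of_preconnected_of_frequently_eq
    (hg.analyticOnNhd isOpen_Om) convex_Om.isPreconnected (real_mem_Om hC one_pos) ?_
  have h1 : Tendsto (fun t : ℝ => (t : ℂ)) (𝓝[>] 1) (𝓝[≠] ((1:ℝ) : ℂ)) := by
    refine tendsto_nhdsWithin_iff.mpr ⟨?_, ?_⟩
    · exact (Complex.continuous_ofReal.tendsto 1).mono_left nhdsWithin_le_nhds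
    · filter_upwards [self_mem_nhdsWithin] with t ht
      have ht : 1 < t := ht
      simp only [mem_compl_iff, mem_singleton_iff, Complex.ofReal_inj]
      exact ht.ne'
  refine h1.frequently (Eventually.frequently ?_)
  filter_upwards [self_mem_nhdsWithin] with t ht
  have ht : 1 < t := ht
  exact h t (by linarith)

theorem SS_semigroup (hT : IsC0Semigroup T)
    (hM1 : 1 ≤ M) (hM : ∀ t : ℝ, 0 ≤ t → ‖T t‖ ≤ M) (hA : IsGenerator T dom A) (hC : 1 ≤ C)
    (hG : ∀ l ∈ W C, IsResolventAt dom A l (G l) ∧ ‖G l‖ ≤ 2 * C / |l.im|)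
    {z w : ℂ} (hz : z ∈ Om C) (hw : w ∈ Om C) :
    SS G C T (z + w) = (SS G C T z).comp (SS G C T w) := by
  have hd := SS_diff hC hG T
  have hadd : ∀ w ∈ Om C, DifferentiableOn ℂ (fun z => SS G C T (z + w)) (Om C) := by
    intro w hw
    exact hd.comp (by fun_prop) (fun z hz => Om_add hz hw)
  have step1 : ∀ t : ℝ, 0 < t → ∀ z ∈ Om C, SS G C T (z + t) = (SS G C T z).comp (T t) := by
    intro t ht
    refine ident_real hC (hadd t (real_mem_Om hC ht)) ?_ ?_
    · exact hd.clm_comp (differentiableOn_const (T t))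
    · intro s hs
      have h1 := SS_real hT hM1 hM hA hC hG (add_pos hs ht)
      rw [Complex.ofReal_add] at h1
      rw [h1, SS_real hT hM1 hM hA hC hG hs]
      exact hT.2.1 s t hs.le ht.le
  have step2 : EqOn (fun w => SS G C T (w + z)) (fun w => (SS G C T z).comp (SS G C T w))
      (Om C) := by
    refine ident_real hC (hadd z hz) ?_ ?_
    · exact (differentiableOn_const (SS G C T z)).clm_comp hd
    · intro t ht
      rw [add_comm, step1 t ht z hz, SS_real hT hM1 hM hA hC hG ht]
  rw [add_comm]
  exact step2 hw

end Sg

theorem sector_bounds (hC : 1 ≤ C) {M : ℝ} (hM1 : 1 ≤ M) {z : ℂ} (hz : z ≠ 0)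
    (harg : |z.arg| ≤ (1 / 16) / (C * M)) :
    z ∈ Om C ∧ 0 < z.re ∧ |z.im| ≤ z.re / (8 * C) := by
  have hCpos : 0 < C := by linarith
  have h1 : |z.arg| ≤ 1 / (16 * C) := by
    refine harg.trans ?_
    rw [div_div]
    have : 0 < M := by linarith
    gcongr 1 / ?_
    nlinarith
  have h2 : |z.arg| ≤ 1 / 16 := by
    refine h1.trans ?_
    gcongr 1 / ?_
    linarith
  have hn : 0 < ‖z‖ := norm_pos_iff.mpr hz
  have hcos : 1 / 2 ≤ Real.cos z.arg := by
    refine le_trans ?_ Real.one_sub_sq_div_two_le_cos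
    rw [← sq_abs]
    nlinarith [abs_nonneg z.arg]
  have hre : ‖z‖ / 2 ≤ z.re := by
    rw [← Complex.norm_mul_cos_arg]; nlinarith
  have him : |z.im| ≤ ‖z‖ * (1 / (16 * C)) := by
    rw [← Complex.norm_mul_sin_arg, abs_mul, abs_norm]
    gcongr
    exact Real.abs_sin_le_abs.trans h1
  have hre0 : 0 < z.re := by linarith
  have hb : |z.im| ≤ z.re / (8 * C) := by
    refine him.trans ?_
    have : z.re / (8 * C) = 2 * z.re * (1 / (16 * C)) := by field_simp; ring
    rw [this]
    gcongr
    linarith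
  refine ⟨?_, hre0, hb⟩
  have e4 : z.re / (4 * C) = 2 * (z.re / (8 * C)) := by field_simp; ring
  have hk : 0 < z.re / (8 * C) := by positivity
  have := abs_le.mp hb
  constructor <;> rw [ww_mul_re, e4] <;> linarith [this.1, this.2]

end Final

end Stmt2Aux

/-- Quantitative generation theorem for bounded holomorphic semigroups:
there are universal constants `c₁, c₂ > 0` such that whenever `A` generates a
`C₀`-semigroup with `‖T t‖ ≤ M` (`M ≥ 1`), `is ∈ ρ(A)` for `s ≠ 0` and
`‖R(is, A)‖ ≤ C/|s|` (`C ≥ 1`), the semigroup extends to a bounded holomorphic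
semigroup `S` on the sector `|arg z| ≤ c₁/(C M)`, satisfying there
`‖S z‖ ≤ c₂ · C M · (1 + log (C M))`. -/
theorem stmt2 :
    ∃ c₁ c₂ : ℝ, 0 < c₁ ∧ 0 < c₂ ∧
      ∀ (X : Type u) [NormedAddCommGroup X] [NormedSpace ℂ X] [CompleteSpace X]
        (T : ℝ → X →L[ℂ] X), IsC0Semigroup T →
      ∀ M : ℝ, 1 ≤ M → (∀ t : ℝ, 0 ≤ t → ‖T t‖ ≤ M) →
      ∀ (dom : Set X) (A : X → X), IsGenerator T dom A →
      ∀ C : ℝ, 1 ≤ C →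
      (∀ s : ℝ, s ≠ 0 → ∃ R : X →L[ℂ] X,
        IsResolventAt dom A ((s : ℂ) * Complex.I) R ∧ ‖R‖ ≤ C / |s|) →
      ∃ S : ℂ → X →L[ℂ] X,
        (∀ t : ℝ, 0 ≤ t → S (t : ℂ) = T t) ∧
        (∀ z₁ z₂ : ℂ, z₁ ≠ 0 → z₂ ≠ 0 → |z₁.arg| ≤ c₁ / (C * M) → |z₂.arg| ≤ c₁ / (C * M) →
          S (z₁ + z₂) = (S z₁).comp (S z₂)) ∧
        DifferentiableOn ℂ S {z : ℂ | z ≠ 0 ∧ |z.arg| < c₁ / (C * M)} ∧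
        (∀ x : X, Tendsto (fun z => S z x)
          (nhdsWithin 0 {z : ℂ | z ≠ 0 ∧ |z.arg| ≤ c₁ / (C * M)}) (nhds x)) ∧
        ∀ z : ℂ, z ≠ 0 → |z.arg| ≤ c₁ / (C * M) →
          ‖S z‖ ≤ c₂ * (C * M) * (1 + Real.log (C * M)) := by
  refine ⟨1 / 16, 4, by norm_num, by norm_num, ?_⟩
  intro X _ _ _ T hT M hM1 hM dom A hA C hC hres
  obtain ⟨G, hG⟩ := Stmt2Aux.exists_resolvent hC hres
  have hSb : ∀ z : ℂ, z ≠ 0 → |z.arg| ≤ 1 / 16 / (C * M) →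
      ‖Stmt2Aux.SS G C T z‖ ≤ M + 3 * C := by
    intro z hz harg
    obtain ⟨h1, h2, h3⟩ := Stmt2Aux.sector_bounds hC hM1 hz harg
    exact Stmt2Aux.SS_norm_le hT hM1 hM hA hC hG h1 h2 h3
  classical
  refine ⟨fun z => if z = 0 then 1 else Stmt2Aux.SS G C T z, ?_, ?_, ?_, ?_, ?_⟩
  · intro t ht
    rcases ht.eq_or_lt with h | h
    · subst h
      simp [hT.1]
    · simp only [Complex.ofReal_eq_zero, h.ne', if_false]
      exact Stmt2Aux.SS_real hT hM1 hM hA hC hG h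
  · intro z w hz hw hza hwa
    have h1 := (Stmt2Aux.sector_bounds hC hM1 hz hza).1
    have h2 := (Stmt2Aux.sector_bounds hC hM1 hw hwa).1
    have h3 := Stmt2Aux.Om_ne_zero (Stmt2Aux.Om_add h1 h2)
    simp only [hz, hw, h3, if_false]
    exact Stmt2Aux.SS_semigroup hT hM1 hM hA hC hG h1 h2
  · refine DifferentiableOn.congr (f := Stmt2Aux.SS G C T) ?_ ?_
    · exact (Stmt2Aux.SS_diff hC hG T).mono fun z hz =>
        (Stmt2Aux.sector_bounds hC hM1 hz.1 (le_of_lt hz.2)).1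
    · intro z hz
      simp only [hz.1, if_false]
  · intro x
    have hK : 0 < M + 3 * C + 1 := by linarith
    rw [Metric.tendsto_nhds]
    intro ε hε
    -- choose h with T h x close to x
    have hT3 := (Metric.tendsto_nhds.mp (hT.2.2 x) (ε / (2 * (M + 3 * C + 1))) (by positivity)).and
      self_mem_nhdsWithin
    obtain ⟨h, hh, hpos⟩ := hT3.exists
    have hpos : 0 < h := hpos
    have hhm := Stmt2Aux.real_mem_Om hC hpos
    have hc : ContinuousAt (fun z : ℂ => Stmt2Aux.SS G C T (z + h) x) 0 := by
      have h1 : ContinuousAt (Stmt2Aux.SS G C T) ((0 : ℂ) + h) := by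
        rw [zero_add]
        exact (Stmt2Aux.SS_diff hC hG T).continuousOn.continuousAt
          (Stmt2Aux.isOpen_Om.mem_nhds hhm)
      have h2 : ContinuousAt (fun z : ℂ => z + (h : ℂ)) 0 := by fun_prop
      have h3 : ContinuousAt (fun z : ℂ => Stmt2Aux.SS G C T (z + h)) 0 :=
        ContinuousAt.comp (f := fun z : ℂ => z + (h : ℂ)) h1 h2
      exact h3.clm_apply continuousAt_const
    have hc2 := Metric.tendsto_nhds.mp hc (ε / 2) (by positivity)
    filter_upwards [self_mem_nhdsWithin, nhdsWithin_le_nhds hc2] with z hz hzc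
    obtain ⟨hz0, hza⟩ := hz
    simp only [hz0, if_false]
    have hm := (Stmt2Aux.sector_bounds hC hM1 hz0 hza).1
    rw [zero_add, Stmt2Aux.SS_semigroup hT hM1 hM hA hC hG hm hhm,
      Stmt2Aux.SS_real hT hM1 hM hA hC hG hpos, ContinuousLinearMap.comp_apply,
      dist_eq_norm] at hzc
    rw [dist_eq_norm] at hh ⊢
    have e : Stmt2Aux.SS G C T z x - x = (Stmt2Aux.SS G C T z (T h x) - T h x) +
        ((T h x - x) - Stmt2Aux.SS G C T z (T h x - x)) := by
      rw [map_sub]; abel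
    have b1 : ‖Stmt2Aux.SS G C T z (T h x - x)‖ ≤ (M + 3 * C) * ‖T h x - x‖ :=
      (Stmt2Aux.SS G C T z).le_of_opNorm_le (hSb z hz0 hza) _
    have b2 : (M + 3 * C + 1) * ‖T h x - x‖ < ε / 2 := by
      rw [lt_div_iff₀ (by positivity)] at hh
      linarith
    rw [e]
    refine (norm_add_le _ _).trans_lt ?_
    have := norm_sub_le (T h x - x) (Stmt2Aux.SS G C T z (T h x - x))
    linarith
  · intro z hz harg
    simp only [hz, if_false]
    refine (hSb z hz harg).trans ?_
    have h1 : 1 ≤ C * M := by nlinarith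
    have h2 := Real.log_nonneg h1
    have h3 : C ≤ C * M := by nlinarith
    have h4 : M ≤ C * M := by nlinarith
    nlinarith [mul_nonneg (by linarith : 0 ≤ 4 * (C * M)) h2]
end
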